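/- There is an absolute constant C such that for all integers n ≥ 2 and f ≥ 1 there exists a decoder function D (depending only on n and f) with the following property: for every finite simple graph G = (V,E) on n vertices there exists a labeling function L_V : V → {0,1}^b with b ≤ C·f⁴·(log₂ n)⁷, such that for all s,t ∈ V and all fault sets F ⊆ V ∖ {s,t} with |F| ≤ f, D applied to (L_V(s), L_V(t), {L_V(v) : v ∈ F}) outputs true if and only if s and t lie in the same connected component of the induced subgraph G − F on V ∖ F. -/

import Mathlib

/-!
Vertices are sorted into `O(log n)` levels so that, in the subgraph of the vertices of level at most
`j`, deleting a set `X` splits those of level `j` into only `O(|X|)` further pieces; a hierarchy of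
maximal weight has this property. Robustness forces a Steiner forest of minimum degree potential to
have degree `O(log n)`, so each cluster (a component of the part of level at most `j`) carries tours
visiting every vertex `O(log n)` times.

Deleting the faults cuts the tours of the `O(f log n)` clusters meeting them into intervals, each
connected in `G - F`; every other cluster survives intact and is replaced by auxiliary edges
between its neighbours. A union of intervals is then a union of components of `G - F` unless an
auxiliary edge leaves it. Such an edge is detected by a nonzero `ZMod 2` checksum over randomly
sampled auxiliary edges, and the checksum of an interval is a difference of two prefix sums, which
labels can store. A seed detects a given edge with probability at least of order `(f log n)⁻³`, so
by a union bound over all queries some fixed choice of `O(f⁴ log⁵ n)` seeds works, each costing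
`O(log² n)` bits.

The decoder never reconstructs `G`: two graphs with equal labels on `s`, `t` and `F` have equal
checksums, hence the same answer, so it may answer according to any graph with these labels.
-/

namespace VertexFault

open Finset
open scoped Classical

section Hierarchy

variable {V : Type*}

/-- The graph `G - X`, kept on the vertex set of `G`: the vertices of `X` become isolated. -/
def isolate (G : SimpleGraph V) (X : Finset V) : SimpleGraph V where
  Adj u v := G.Adj u v ∧ u ∉ X ∧ v ∉ X
  symm := ⟨fun _ _ h => ⟨h.1.symm, h.2.2, h.2.1⟩⟩
  loopless := ⟨fun _ h => h.1.ne rfl⟩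

theorem isolate_le (G : SimpleGraph V) (X : Finset V) : isolate G X ≤ G :=
  fun _ _ h => h.1

theorem isolate_anti (G : SimpleGraph V) : Antitone (isolate G) :=
  fun _ _ h _ _ huv => ⟨huv.1, fun hu => huv.2.1 (h hu), fun hv => huv.2.2 (h hv)⟩

theorem isolate_empty (G : SimpleGraph V) : isolate G ∅ = G := by
  ext u v
  simp [isolate]

theorem isolate_isolate (G : SimpleGraph V) (X Y : Finset V) :
    isolate (isolate G X) Y = isolate G (X ∪ Y) := by
  ext u v
  simp only [isolate, mem_union]
  tauto

/-- The number of connected components of `G - X` that meet `U`. -/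
noncomputable def numComponents (G : SimpleGraph V) (U X : Finset V) : ℕ :=
  #((U \ X).image (isolate G X).connectedComponentMk)

theorem numComponents_le_card (G : SimpleGraph V) (U X : Finset V) : numComponents G U X ≤ #U :=
  card_image_le.trans (card_le_card sdiff_subset)

theorem numComponents_mono (G : SimpleGraph V) {U U' : Finset V} (X : Finset V) (h : U ⊆ U') :
    numComponents G U X ≤ numComponents G U' X :=
  card_le_card (image_subset_image (sdiff_subset_sdiff h Subset.rfl))

theorem numComponents_eq_zero {G : SimpleGraph V} {U X : Finset V} (h : U ⊆ X) :
    numComponents G U X = 0 := by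
  simp [numComponents, sdiff_eq_empty_iff_subset.2 h]

theorem numComponents_isolate (G : SimpleGraph V) (U Y X : Finset V) :
    numComponents (isolate G Y) (U \ Y) X = numComponents G U (Y ∪ X) := by
  rw [numComponents, numComponents, isolate_isolate, sdiff_sdiff_left, sup_eq_union]

theorem card_image_le_card_image {α β γ : Type*} {s : Finset α} {f : α → β} {g : α → γ}
    (h : ∀ x ∈ s, ∀ y ∈ s, g x = g y → f x = f y) : #(s.image f) ≤ #(s.image g) := by
  refine card_le_card_of_forall_subsingleton (fun b c => ∃ x ∈ s, f x = b ∧ g x = c) ?_ ?_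
  · rintro _ hb
    obtain ⟨x, hx, rfl⟩ := mem_image.1 hb
    exact ⟨g x, mem_image_of_mem g hx, x, hx, rfl, rfl⟩
  · rintro c _ _ ⟨_, x, hx, rfl, hxc⟩ _ ⟨_, y, hy, rfl, hyc⟩
    exact h x hx y hy (hxc.trans hyc.symm)

theorem numComponents_le_union (G : SimpleGraph V) (U Y X : Finset V) :
    numComponents G U Y ≤ numComponents G (U ∪ X) (Y ∪ X) + #X := by
  have hcover : U \ Y ⊆ (U ∪ X) \ (Y ∪ X) ∪ X := by
    intro v
    simp only [mem_sdiff, mem_union]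
    tauto
  calc numComponents G U Y
      ≤ #(((U ∪ X) \ (Y ∪ X) ∪ X).image (isolate G Y).connectedComponentMk) :=
        card_le_card (image_subset_image hcover)
    _ ≤ #(((U ∪ X) \ (Y ∪ X)).image (isolate G Y).connectedComponentMk) + #X := by
        rw [image_union]
        exact (card_union_le _ _).trans (Nat.add_le_add_left card_image_le _)
    _ ≤ numComponents G (U ∪ X) (Y ∪ X) + #X := by
        refine Nat.add_le_add_right (card_image_le_card_image fun u _ v _ huv => ?_) _
        rw [SimpleGraph.ConnectedComponent.eq] at huv ⊢
        exact huv.mono (isolate_anti G subset_union_left)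

/-- The terminals `U` are `c`-robustly connected in `H`: deleting any vertex set `X` increases the
number of components meeting `U` by at most `c * #X`. -/
def IsRobust (c : ℕ) (H : SimpleGraph V) (U : Finset V) : Prop :=
  ∀ X, numComponents H U X ≤ numComponents H U ∅ + c * #X

/-- The contribution of level `i` to the weight of a hierarchy: a component counts `2 ^ i` and a
vertex passed on to the next level costs `12 * 2 ^ i`. -/
noncomputable def levelWeight (G : SimpleGraph V) (D : ℕ → Finset V) (i : ℕ) : ℤ :=
  2 ^ i * ((numComponents G (D i) (D (i + 1)) : ℤ) - 12 * #(D (i + 1)))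

/-- The sequence `D` with the vertices of `X` kept in the sets up to index `i`. -/
noncomputable def delay (D : ℕ → Finset V) (X : Finset V) (i j : ℕ) : Finset V :=
  if j ≤ i then D j ∪ X else D j

section Delay

variable (D : ℕ → Finset V) (X : Finset V) {i j : ℕ}

theorem delay_of_le (h : j ≤ i) : delay D X i j = D j ∪ X :=
  if_pos h

theorem delay_of_lt (h : i < j) : delay D X i j = D j :=
  if_neg h.not_ge

theorem subset_delay : D j ⊆ delay D X i j := by
  rcases le_or_gt j i with h | h
  · rw [delay_of_le D X h]
    exact subset_union_left
  · rw [delay_of_lt D X h]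

variable (G : SimpleGraph V)

theorem levelWeight_delay_of_lt (h : j < i) :
    levelWeight G D j - 2 ^ j * (13 * #X) ≤ levelWeight G (delay D X i) j := by
  rw [levelWeight, levelWeight, delay_of_le D X (by omega), delay_of_le D X (by omega), ← mul_sub]
  refine mul_le_mul_of_nonneg_left ?_ (by positivity)
  have := numComponents_le_union G (D j) (D (j + 1)) X
  have := card_union_le (D (j + 1)) X
  omega

theorem levelWeight_delay_self (i : ℕ) :
    2 ^ i * ((numComponents G (D i) (D (i + 1) ∪ X) : ℤ) - 12 * #(D (i + 1)) - 12 * #X) ≤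
      levelWeight G (delay D X (i + 1)) i := by
  rw [levelWeight, delay_of_le D X (by omega), delay_of_le D X (by omega)]
  refine mul_le_mul_of_nonneg_left ?_ (by positivity)
  have := numComponents_mono G (D (i + 1) ∪ X) (subset_union_left (s₁ := D i) (s₂ := X))
  have := card_union_le (D (i + 1)) X
  omega

theorem levelWeight_delay_of_le (h : i ≤ j) :
    levelWeight G D j ≤ levelWeight G (delay D X i) j := by
  rw [levelWeight, levelWeight, delay_of_lt D X (Nat.lt_add_one_of_le h)]
  refine mul_le_mul_of_nonneg_left ?_ (by positivity)
  have := numComponents_mono G (D (j + 1)) (subset_delay D X (i := i) (j := j))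
  omega

end Delay

variable [Fintype V]

/-- A decreasing sequence of vertex sets that starts with all vertices and is exhausted after `p`
steps; the vertices of `D i \ D (i + 1)` form level `i`. -/
structure IsHierarchy (p : ℕ) (D : ℕ → Finset V) : Prop where
  zero : D 0 = univ
  anti : Antitone D
  last : D p = ∅

theorem IsHierarchy.delay {p i : ℕ} {D : ℕ → Finset V} (hD : IsHierarchy p D) (X : Finset V)
    (hi : i < p) :
    IsHierarchy p (delay D X i) := by
  refine ⟨?_, antitone_nat_of_succ_le fun j => ?_, by rw [delay_of_lt D X hi, hD.last]⟩
  · exact univ_subset_iff.1 (hD.zero ▸ subset_delay D X)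
  · rcases le_or_gt (j + 1) i with hj | hj
    · rw [delay_of_le D X hj, delay_of_le D X (by omega)]
      exact union_subset_union_left (hD.anti j.le_succ)
    · rw [delay_of_lt D X hj]
      exact (hD.anti j.le_succ).trans (subset_delay D X)

theorem levelWeight_le (G : SimpleGraph V) (D : ℕ → Finset V) (i : ℕ) :
    levelWeight G D i ≤ 2 ^ i * (Fintype.card V : ℤ) := by
  have := (numComponents_le_card G (D i) (D (i + 1))).trans (card_le_univ _)
  refine mul_le_mul_of_nonneg_left ?_ (by positivity)
  omega

/-- A hierarchy with `p` levels of maximal total weight. -/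
structure IsMaxHierarchy (G : SimpleGraph V) (p : ℕ) (D : ℕ → Finset V) : Prop
    extends IsHierarchy p D where
  weight_le : ∀ D', IsHierarchy p D' →
    ∑ i ∈ range p, levelWeight G D' i ≤ ∑ i ∈ range p, levelWeight G D i

theorem exists_isMaxHierarchy (G : SimpleGraph V) {p : ℕ} (hp : p ≠ 0) :
    ∃ D, IsMaxHierarchy G p D := by
  have htrivial : IsHierarchy p fun i => if i = 0 then (univ : Finset V) else ∅ := by
    refine ⟨if_pos rfl, antitone_nat_of_succ_le fun i => by simp, if_neg hp⟩
  obtain ⟨_, ⟨D, hD, rfl⟩, hmax⟩ := Int.exists_greatest_of_bdd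
    (P := fun z => ∃ D, IsHierarchy p D ∧ ∑ i ∈ range p, levelWeight G D i = z)
    ⟨∑ i ∈ range p, 2 ^ i * (Fintype.card V : ℤ), by
      rintro _ ⟨D, -, rfl⟩
      exact sum_le_sum fun i _ => levelWeight_le G D i⟩
    ⟨_, _, htrivial, rfl⟩
  exact ⟨D, hD, fun D' hD' => hmax _ ⟨D', hD', rfl⟩⟩

namespace IsMaxHierarchy

variable {G : SimpleGraph V} {p : ℕ} {D : ℕ → Finset V}

-- Compare `D` with the hierarchy in which the vertices leaving level `i + 1` leave level `i`.
theorem four_mul_card_succ_le (hD : IsMaxHierarchy G p D) {i : ℕ} (hi : i + 1 < p) :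
    4 * #(D (i + 1)) ≤ #(D i) + 4 * #(D (i + 2)) := by
  set D' := Function.update D (i + 1) (D (i + 2))
  have hsame : ∀ j, j ≠ i + 1 → D' j = D j := fun j hj => Function.update_of_ne hj _ _
  have hmoved : D' (i + 1) = D (i + 2) := Function.update_self _ _ _
  have hD' : IsHierarchy p D' := by
    refine ⟨by rw [hsame 0 (by omega), hD.zero], antitone_nat_of_succ_le fun j => ?_,
      by rw [hsame p (by omega), hD.last]⟩
    by_cases hj : j = i + 1
    · rw [hj, hmoved, hsame (i + 1 + 1) (by omega)]
    by_cases hji : j = i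
    · rw [hji, hmoved, hsame i (by omega)]
      exact hD.anti (by omega)
    · rw [hsame j hj, hsame (j + 1) (by omega)]
      exact hD.anti j.le_succ
  have hweight : 0 ≤ levelWeight G D i - levelWeight G D' i
      + (levelWeight G D (i + 1) - levelWeight G D' (i + 1)) := by
    have h := hD.weight_le D' hD'
    rw [← sub_nonneg, ← sum_sub_distrib, sum_eq_add i (i + 1) (by omega)] at h
    · exact h
    · intro j _ hj
      simp only [levelWeight, hsame j hj.2, hsame (j + 1) (by omega), sub_self]
    · exact fun h => absurd (mem_range.2 (by omega)) h
    · exact fun h => absurd (mem_range.2 hi) h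
  simp only [levelWeight, hmoved, hsame i (by omega), hsame (i + 1 + 1) (by omega),
    numComponents_eq_zero (G := G) (Subset.refl (D (i + 2))), pow_succ] at hweight
  have hscaled : 0 ≤ 2 ^ i * ((numComponents G (D i) (D (i + 1)) : ℤ)
      + 2 * numComponents G (D (i + 1)) (D (i + 2)) + 12 * #(D (i + 2)) - 12 * #(D (i + 1))
      - numComponents G (D i) (D (i + 2))) := by
    push_cast at hweight
    linarith
  have hgain := nonneg_of_mul_nonneg_right hscaled (by positivity)
  have := numComponents_le_card G (D i) (D (i + 1))
  have := numComponents_le_card G (D (i + 1)) (D (i + 2))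
  have := card_le_card (hD.anti (Nat.le_add_right i 1))
  omega

theorem two_mul_card_succ_le {q : ℕ} (hD : IsMaxHierarchy G (q + 1) D) {i : ℕ} (hi : i ≤ q) :
    2 * #(D (i + 1)) ≤ #(D i) := by
  induction hi using Nat.decreasingInduction with
  | self => simp [hD.last]
  | of_succ i hi ih =>
    have h : 4 * #(D (i + 1)) ≤ #(D i) + 4 * #(D (i + 1 + 1)) :=
      hD.four_mul_card_succ_le (Nat.succ_lt_succ hi)
    omega

theorem two_pow_mul_card_le {q : ℕ} (hD : IsMaxHierarchy G (q + 1) D) {i : ℕ} (hi : i ≤ q) :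
    2 ^ i * #(D i) ≤ Fintype.card V := by
  induction i with
  | zero => simpa using card_le_univ (D 0)
  | succ i ih =>
    calc 2 ^ (i + 1) * #(D (i + 1)) = 2 ^ i * (2 * #(D (i + 1))) := by ring
      _ ≤ 2 ^ i * #(D i) := Nat.mul_le_mul_left _ (hD.two_mul_card_succ_le (by omega))
      _ ≤ Fintype.card V := ih (by omega)

theorem eq_empty {q : ℕ} (hD : IsMaxHierarchy G (q + 1) D) (hq : Fintype.card V < 2 ^ q) :
    D q = ∅ := by
  by_contra hne
  have hpos : 1 ≤ #(D q) := card_pos.2 (nonempty_iff_ne_empty.2 hne)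
  exact absurd ((Nat.le_mul_of_pos_right _ hpos).trans (hD.two_pow_mul_card_le le_rfl)) hq.not_ge

theorem sum_levelWeight_delay_le (hD : IsMaxHierarchy G p D) {i : ℕ} (hi : i + 1 < p)
    (X : Finset V) : ∑ j ∈ range p, levelWeight G (delay D X (i + 1)) j ≤
      ∑ j ∈ range p, levelWeight G D j :=
  hD.weight_le _ (hD.toIsHierarchy.delay X hi)

theorem numComponents_union_le (hD : IsMaxHierarchy G p D) {i : ℕ} (hi : i + 1 < p)
    (X : Finset V) :
    numComponents G (D i) (D (i + 1) ∪ X) ≤ numComponents G (D i) (D (i + 1)) + 25 * #X := by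
  have hsplit : ∀ w : ℕ → ℤ,
      ∑ j ∈ range p, w j = ∑ j ∈ range i, w j + w i + ∑ j ∈ Ico (i + 1) p, w j := fun w => by
    rw [← sum_range_succ, sum_range_add_sum_Ico _ hi.le]
  have hmax := hD.sum_levelWeight_delay_le hi X
  rw [hsplit, hsplit (levelWeight G D)] at hmax
  have hgeom : (∑ j ∈ range i, (2 : ℤ) ^ j) ≤ 2 ^ i := by
    have := Nat.geomSum_lt (m := 2) le_rfl (s := range i) (n := i) fun j hj => mem_range.1 hj
    exact_mod_cast this.le
  have hbelow : ∑ j ∈ range i, levelWeight G D j - 2 ^ i * (13 * #X) ≤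
      ∑ j ∈ range i, levelWeight G (delay D X (i + 1)) j :=
    calc ∑ j ∈ range i, levelWeight G D j - 2 ^ i * (13 * #X)
        ≤ ∑ j ∈ range i, levelWeight G D j - (∑ j ∈ range i, 2 ^ j) * (13 * #X) := by gcongr
      _ = ∑ j ∈ range i, (levelWeight G D j - 2 ^ j * (13 * #X)) := by
        rw [sum_sub_distrib, sum_mul]
      _ ≤ _ := sum_le_sum fun j hj =>
        levelWeight_delay_of_lt D X G (Nat.lt_succ_of_lt (mem_range.1 hj))
  have habove : ∑ j ∈ Ico (i + 1) p, levelWeight G D j ≤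
      ∑ j ∈ Ico (i + 1) p, levelWeight G (delay D X (i + 1)) j :=
    sum_le_sum fun j hj => levelWeight_delay_of_le D X G (mem_Ico.1 hj).1
  have hscaled : (0 : ℤ) ≤ 2 ^ i * (numComponents G (D i) (D (i + 1)) + 25 * #X
      - numComponents G (D i) (D (i + 1) ∪ X)) := by
    have hat := levelWeight_delay_self D X G i
    rw [levelWeight.eq_def G D i] at hmax
    linarith
  have := nonneg_of_mul_nonneg_right hscaled (by positivity)
  omega

end IsMaxHierarchy

theorem exists_isRobust_hierarchy (G : SimpleGraph V) {q : ℕ} (hq : Fintype.card V < 2 ^ q) :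
    ∃ D : ℕ → Finset V, IsHierarchy q D ∧
      ∀ i, IsRobust 25 (isolate G (D (i + 1))) (D i \ D (i + 1)) := by
  obtain ⟨D, hD⟩ := exists_isMaxHierarchy G q.succ_ne_zero
  refine ⟨D, ⟨hD.zero, hD.anti, hD.eq_empty hq⟩, fun i X => ?_⟩
  rw [numComponents_isolate, numComponents_isolate, union_empty]
  rcases lt_or_ge i q with hi | hi
  · exact hD.numComponents_union_le (Nat.succ_lt_succ hi) X
  · have hempty : D i = ∅ := subset_empty.1 (hD.eq_empty hq ▸ hD.anti hi)
    simp [hempty, numComponents]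

end Hierarchy

section RootedForest

variable {V : Type*} {T : SimpleGraph V}

/-- A choice of a root in every component of `T` together with parent pointers along edges of `T`
leading there. Roots are their own parents; `T` need not be acyclic. -/
structure RootedForest (T : SimpleGraph V) where
  parent : V → V
  depth : V → ℕ
  root : V → V
  depth_parent_lt : ∀ {x}, parent x ≠ x → depth (parent x) < depth x
  adj_parent : ∀ {x}, parent x ≠ x → T.Adj x (parent x)
  root_eq_self : ∀ {x}, parent x = x → root x = x
  root_eq_root : ∀ {x y}, T.Reachable x y → root x = root y

theorem exists_adj_dist_lt {x y : V} (h : T.Reachable x y) (hne : x ≠ y) :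
    ∃ w, T.Adj y w ∧ T.dist x w < T.dist x y := by
  obtain ⟨p, hp⟩ := h.symm.exists_walk_length_eq_dist
  cases p with
  | nil => exact absurd rfl hne
  | cons hadj q =>
    refine ⟨_, hadj, ?_⟩
    rw [T.dist_comm (u := x), T.dist_comm (u := x), ← hp, SimpleGraph.Walk.length_cons]
    exact Nat.lt_succ_of_le (SimpleGraph.dist_le q)

theorem exists_rootedForest (T : SimpleGraph V) (U : Finset V) :
    ∃ P : RootedForest T, ∀ u ∈ U, P.root u ∈ U := by
  have hrep : ∀ c : T.ConnectedComponent, ∃ r, T.connectedComponentMk r = c ∧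
      ∀ u ∈ U, T.connectedComponentMk u = c → r ∈ U := by
    intro c
    by_cases h : ∃ u ∈ U, T.connectedComponentMk u = c
    · obtain ⟨u, hu, huc⟩ := h
      exact ⟨u, huc, fun _ _ _ => hu⟩
    · obtain ⟨v, hv⟩ := c.exists_rep
      exact ⟨v, hv, fun u hu huc => absurd ⟨u, hu, huc⟩ h⟩
  choose rep hrep hrepU using hrep
  set root : V → V := fun x => rep (T.connectedComponentMk x)
  have hroot : ∀ x, T.Reachable (root x) x := fun x =>
    SimpleGraph.ConnectedComponent.eq.1 (hrep _)
  have hcongr : ∀ {x y}, T.Reachable x y → root x = root y := fun h =>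
    congrArg rep (SimpleGraph.ConnectedComponent.eq.2 h)
  have hparent : ∀ x, ∃ w, (root x = x → w = x) ∧
      (root x ≠ x → T.Adj x w ∧ T.dist (root x) w < T.dist (root x) x) := by
    intro x
    by_cases h : root x = x
    · exact ⟨x, fun _ => rfl, fun h' => absurd h h'⟩
    · obtain ⟨w, hw⟩ := exists_adj_dist_lt (hroot x) h
      exact ⟨w, fun h' => absurd h' h, fun _ => hw⟩
  choose parent hself hstep using hparent
  have hstep' : ∀ {x}, parent x ≠ x →
      T.Adj x (parent x) ∧ T.dist (root x) (parent x) < T.dist (root x) x :=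
    fun h => hstep _ fun hx => h (hself _ hx)
  refine ⟨⟨parent, fun x => T.dist (root x) x, root, fun {x} h => ?_, fun h => (hstep' h).1,
    fun {x} h => ?_, hcongr⟩, fun u hu => hrepU _ u hu rfl⟩
  · rw [← hcongr (hstep' h).1.reachable]
    exact (hstep' h).2
  · by_contra hx
    exact (hstep x hx).1.ne h.symm

namespace RootedForest

variable (P : RootedForest T)

/-- `c` is an ancestor of `x`, possibly `x` itself. -/
def IsAncestor (c x : V) : Prop := ∃ k, P.parent^[k] x = c

variable {P}

theorem IsAncestor.refl (x : V) : P.IsAncestor x x := ⟨0, rfl⟩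

theorem IsAncestor.of_parent {c x : V} (h : P.IsAncestor c (P.parent x)) : P.IsAncestor c x := by
  obtain ⟨k, hk⟩ := h
  exact ⟨k + 1, hk⟩

@[elab_as_elim]
theorem IsAncestor.parent_induction {c : V} {motive : ∀ x, P.IsAncestor c x → Prop}
    (self : motive c (.refl c))
    (step : ∀ x (h : P.IsAncestor c (P.parent x)), motive (P.parent x) h → motive x h.of_parent)
    {x : V} (h : P.IsAncestor c x) : motive x h := by
  obtain ⟨k, hk⟩ := h
  induction k generalizing x with
  | zero =>
    obtain rfl : x = c := hk
    exact self
  | succ k ih => exact step x ⟨k, hk⟩ (ih hk)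

theorem isAncestor_iff {c x : V} : P.IsAncestor c x ↔ x = c ∨ P.IsAncestor c (P.parent x) := by
  refine ⟨fun ⟨k, hk⟩ => ?_, ?_⟩
  · cases k with
    | zero => exact Or.inl hk
    | succ k => exact Or.inr ⟨k, hk⟩
  · rintro (rfl | h)
    · exact .refl x
    · exact h.of_parent

theorem IsAncestor.eq_or_depth_lt {c x : V} (h : P.IsAncestor c x) :
    x = c ∨ P.depth c < P.depth x := by
  induction h using IsAncestor.parent_induction with
  | self => exact Or.inl rfl
  | step x _ ih =>
    by_cases hx : P.parent x = x
    · rwa [hx] at ih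
    · have := P.depth_parent_lt hx
      rcases ih with rfl | ih <;> right <;> omega

theorem IsAncestor.antisymm {a b : V} (hab : P.IsAncestor a b) (hba : P.IsAncestor b a) :
    a = b := by
  rcases hab.eq_or_depth_lt with h | h
  · exact h.symm
  · rcases hba.eq_or_depth_lt with h' | h'
    · exact h'
    · omega

theorem IsAncestor.reachable {T' : SimpleGraph V} {x y : V} (h : P.IsAncestor y x)
    (hT' : ∀ v, P.IsAncestor v x → v ≠ y → P.parent v ≠ v → T'.Adj v (P.parent v)) :
    T'.Reachable x y := by
  induction h using IsAncestor.parent_induction with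
  | self => exact .refl _
  | step x _ ih =>
    have hup := ih fun v hv => hT' v hv.of_parent
    by_cases hxy : x = y
    · rw [hxy]
    by_cases hroot : P.parent x = x
    · rwa [hroot] at hup
    · exact (hT' x (.refl x) hxy hroot).reachable.trans hup

theorem IsAncestor.root_eq {c x : V} (h : P.IsAncestor c x) : P.root c = P.root x :=
  (P.root_eq_root (h.reachable fun _ _ _ => P.adj_parent)).symm

theorem isAncestor_root (x : V) : P.IsAncestor (P.root x) x := by
  induction hd : P.depth x using Nat.strong_induction_on generalizing x with
  | _ d ih =>
    by_cases hx : P.parent x = x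
    · rw [P.root_eq_self hx]
      exact .refl x
    · rw [P.root_eq_root (P.adj_parent hx).reachable]
      exact (ih _ (hd ▸ P.depth_parent_lt hx) _ rfl).of_parent

theorem reachable_root (P : RootedForest T) (x : V) : T.Reachable x (P.root x) :=
  (isAncestor_root x).reachable fun _ _ _ => P.adj_parent

theorem root_root (x : V) : P.root (P.root x) = P.root x :=
  (P.root_eq_root (P.reachable_root x)).symm

theorem parent_root (x : V) : P.parent (P.root x) = P.root x := by
  by_contra h
  have hparent : P.IsAncestor (P.root x) (P.parent (P.root x)) := by
    have := isAncestor_root (P := P) (P.parent (P.root x))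
    rwa [← P.root_eq_root (P.adj_parent h).reachable, root_root] at this
  exact h (IsAncestor.antisymm ⟨1, rfl⟩ hparent)

theorem adj_parent_deleteEdges {c v : V} (hv : P.parent v ≠ v) (hvc : v ≠ c) :
    (T.deleteEdges {s(c, P.parent c)}).Adj v (P.parent v) := by
  refine SimpleGraph.deleteEdges_adj.2 ⟨P.adj_parent hv, fun h => ?_⟩
  rcases Sym2.eq_iff.1 h with ⟨h, -⟩ | ⟨hvp, hpc⟩
  · exact hvc h
  · have hdv := P.depth_parent_lt hv
    have hdc := P.depth_parent_lt (x := c) (hvp ▸ hvc)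
    rw [hpc] at hdv
    rw [← hvp] at hdc
    omega

/-- The ancestors of `x` that are roots or children of `B`. It determines the piece containing `x`
when the forest is cut between the vertices of `B` and their children. -/
def cutAncestors (P : RootedForest T) (B : Finset V) (x : V) : Set V :=
  {c | (P.parent c = c ∨ P.parent c ∈ B) ∧ P.IsAncestor c x}

variable {B : Finset V}

theorem cutAncestors_parent {x : V} (hx : P.parent x ∉ B) :
    P.cutAncestors B x = P.cutAncestors B (P.parent x) := by
  ext c
  refine and_congr_right fun hc => ⟨fun h => ?_, .of_parent⟩
  rcases isAncestor_iff.1 h with rfl | h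
  · rw [hc.resolve_right hx]
    exact .refl x
  · exact h

theorem injOn_cutAncestors :
    Set.InjOn (P.cutAncestors B) {c | P.parent c = c ∨ P.parent c ∈ B} := by
  intro c hc c' hc' h
  have hcc' : c ∈ P.cutAncestors B c' := h ▸ ⟨hc, .refl c⟩
  have hc'c : c' ∈ P.cutAncestors B c := h ▸ ⟨hc', .refl c'⟩
  exact hcc'.2.antisymm hc'c.2

theorem cutAncestors_eq_or_exists_mem {c w : V} (hcw : P.IsAncestor c w) :
    P.cutAncestors B w = P.cutAncestors B c ∨
      ∃ b ∈ B, P.cutAncestors B b = P.cutAncestors B c := by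
  induction hcw using IsAncestor.parent_induction with
  | self => exact Or.inl rfl
  | step x _ ih =>
    rcases ih with ih | ih
    · by_cases hx : P.parent x ∈ B
      · exact Or.inr ⟨_, hx, ih⟩
      · exact Or.inl ((cutAncestors_parent hx).trans ih)
    · exact Or.inr ih

theorem exists_separating_ancestor {x y : V} (hroot : P.root x = P.root y)
    (hne : P.cutAncestors B x ≠ P.cutAncestors B y) :
    ∃ c, P.parent c ≠ c ∧ P.parent c ∈ B ∧
      (P.IsAncestor c x ∧ ¬ P.IsAncestor c y ∨ P.IsAncestor c y ∧ ¬ P.IsAncestor c x) := by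
  obtain ⟨c, hc⟩ := not_forall.1 fun h => hne (Set.ext h)
  have hsep : (P.parent c = c ∨ P.parent c ∈ B) ∧
      (P.IsAncestor c x ∧ ¬ P.IsAncestor c y ∨ P.IsAncestor c y ∧ ¬ P.IsAncestor c x) := by
    simp only [cutAncestors, Set.mem_ofPred_eq] at hc
    tauto
  have hproper : P.parent c ≠ c := fun h => by
    have hc_root := P.root_eq_self h
    rcases hsep.2 with ⟨hx, hy⟩ | ⟨hy, hx⟩
    · exact hy (by rw [← hc_root, hx.root_eq, hroot]; exact isAncestor_root y)
    · exact hx (by rw [← hc_root, hy.root_eq, ← hroot]; exact isAncestor_root x)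
  exact ⟨c, hproper, hsep.1.resolve_left hproper, hsep.2⟩

/-- Insert an excursion `a, b, a` at an occurrence of `a`. -/
theorem exists_isChain_perm_cons_cons {α : Type*} {R : α → α → Prop} {a b : α} (hab : R a b)
    (hba : R b a) {l : List α} (hl : l.IsChain R) (ha : a ∈ l) :
    ∃ l' : List α, l'.IsChain R ∧ l'.Perm (a :: b :: l) := by
  obtain ⟨l₁, l₂, rfl⟩ := List.append_of_mem ha
  refine ⟨l₁ ++ a :: b :: a :: l₂, ?_, ?_⟩
  · rw [List.isChain_append] at hl ⊢
    exact ⟨hl.1, .cons_cons hab (.cons_cons hba hl.2.1), by simpa using hl.2.2⟩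
  · exact List.perm_middle.trans (.cons a List.perm_middle)

theorem exists_eulerTour (P : RootedForest T) {ρ : V} {A : Finset V} (hρ : ρ ∉ A)
    (hA : ∀ x ∈ A, P.parent x ≠ x ∧ P.parent x ∈ insert ρ A) :
    ∃ l : List V, l.IsChain T.Adj ∧ (∀ x, x ∈ l ↔ x ∈ insert ρ A) ∧
      ∀ x, l.count x ≤ 1 + #{c ∈ A | P.parent c = x} := by
  induction A using Finset.induction_on_max_value P.depth with
  | empty => exact ⟨[ρ], List.isChain_singleton _, by simp, fun x => by
      simpa using List.count_le_length (a := x) (l := [ρ])⟩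
  | insert a A ha hmax ih =>
    have hnot_child : ∀ x ∈ insert a A, P.parent x ∈ insert ρ A := fun x hx => by
      obtain ⟨hpx, hpA⟩ := hA x hx
      refine mem_of_mem_insert_of_ne (insert_comm ρ a A ▸ hpA) fun h => ?_
      have hdepth := P.depth_parent_lt hpx
      rw [h] at hdepth
      rcases mem_insert.1 hx with rfl | hx
      · exact hdepth.false
      · exact hdepth.not_ge (hmax x hx)
    obtain ⟨l, hchain, hmem, hcount⟩ := ih (fun h => hρ (mem_insert_of_mem h)) fun x hx =>
      ⟨(hA x (mem_insert_of_mem hx)).1, hnot_child x (mem_insert_of_mem hx)⟩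
    have hpa : P.parent a ≠ a := (hA a (mem_insert_self a A)).1
    have hpl : P.parent a ∈ l := (hmem _).2 (hnot_child a (mem_insert_self a A))
    have hal : l.count a = 0 := List.count_eq_zero.2 fun h =>
      (mem_insert.1 ((hmem a).1 h)).elim (fun h => hρ (h ▸ mem_insert_self a A)) ha
    obtain ⟨l', hchain', hperm⟩ :=
      exists_isChain_perm_cons_cons (P.adj_parent hpa).symm (P.adj_parent hpa) hchain hpl
    refine ⟨l', hchain', fun x => ?_, fun x => ?_⟩
    · rw [hperm.mem_iff, List.mem_cons, List.mem_cons, hmem, or_iff_right_of_imp, ← mem_insert,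
        insert_comm]
      rintro rfl
      exact Or.inr ((hmem _).1 hpl)
    · have hchildren : #{c ∈ insert a A | P.parent c = x} =
          (if P.parent a = x then 1 else 0) + #{c ∈ A | P.parent c = x} := by
        rw [card_filter, sum_insert ha, ← card_filter]
      rw [hperm.count_eq, List.count_cons, List.count_cons, hchildren]
      by_cases hax : a = x
      · simp only [beq_iff_eq]
        rw [if_pos hax, ← hax, hal]
        omega
      · have := hcount x
        simp only [beq_iff_eq, if_neg hax]
        omega

end RootedForest

end RootedForest

section SteinerForest

variable {V : Type*}

theorem exists_isPath_of_apply_ne {γ : Type*} {K : SimpleGraph V} {L : V → Prop} {g : V → γ}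
    {x y : V} (hx : L x) (hy : L y) (hg : g x ≠ g y) (hK : K.Reachable x y) :
    ∃ z₁ z₂, ∃ p : K.Walk z₁ z₂, p.IsPath ∧ L z₁ ∧ L z₂ ∧ g z₁ ≠ g z₂ ∧
      ∀ v ∈ p.support, L v → v = z₁ ∨ v = z₂ := by
  obtain ⟨q, hq⟩ := hK.exists_isPath
  induction hn : q.length using Nat.strong_induction_on generalizing x y with
  | _ n ih =>
    subst hn
    by_cases hinner : ∃ v, ∃ _ : v ∈ q.support, L v ∧ v ≠ x ∧ v ≠ y
    · obtain ⟨v, hv, hLv, hvx, hvy⟩ := hinner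
      by_cases hgv : g x = g v
      · exact ih _ (q.length_dropUntil_lt_length hv hvx) hLv hy (hgv ▸ hg)
          (q.dropUntil v hv).reachable _ (hq.dropUntil hv) rfl
      · exact ih _ (q.length_takeUntil_lt_length hv hvy) hx hLv hgv
          (q.takeUntil v hv).reachable _ (hq.takeUntil hv) rfl
    · refine ⟨x, y, q, hq, hx, hy, hg, fun v hv hLv => ?_⟩
      by_contra! hne
      exact hinner ⟨v, hv, hLv, hne⟩

section PathDegree

variable {K : SimpleGraph V} {x y : V} (p : K.Walk x y)

theorem reachable_spanningCoe_toSubgraph : p.toSubgraph.spanningCoe.Reachable x y :=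
  (p.toSubgraph_connected.preconnected ⟨x, p.start_mem_verts_toSubgraph⟩
    ⟨y, p.end_mem_verts_toSubgraph⟩).map p.toSubgraph.coeEmbeddingSpanningCoe.toHom

variable [Fintype V]

theorem degree_spanningCoe_toSubgraph (v : V) :
    p.toSubgraph.spanningCoe.degree v = (p.toSubgraph.neighborSet v).ncard := by
  rw [← SimpleGraph.card_neighborFinset_eq_degree, ← Set.ncard_coe_finset,
    SimpleGraph.coe_neighborFinset]
  rfl

variable {p}

theorem degree_spanningCoe_eq_zero {v : V} (hv : v ∉ p.support) :
    p.toSubgraph.spanningCoe.degree v = 0 := by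
  rw [SimpleGraph.degree_eq_zero]
  exact fun w hw => hv (SimpleGraph.Walk.mem_support_of_adj_toSubgraph hw)

theorem degree_spanningCoe_start_le (hp : p.IsPath) (hxy : x ≠ y) :
    p.toSubgraph.spanningCoe.degree x ≤ 1 := by
  rw [degree_spanningCoe_toSubgraph,
    hp.neighborSet_toSubgraph_startpoint fun h => hxy h.eq, Set.ncard_singleton]

theorem degree_spanningCoe_end_le (hp : p.IsPath) (hxy : x ≠ y) :
    p.toSubgraph.spanningCoe.degree y ≤ 1 := by
  rw [degree_spanningCoe_toSubgraph,
    hp.neighborSet_toSubgraph_endpoint fun h => hxy h.eq, Set.ncard_singleton]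

theorem degree_spanningCoe_le_two (hp : p.IsPath) (hxy : x ≠ y) (v : V) :
    p.toSubgraph.spanningCoe.degree v ≤ 2 := by
  by_cases hv : v ∈ p.support
  · obtain ⟨i, hiv, hi⟩ := SimpleGraph.Walk.mem_support_iff_exists_getVert.1 hv
    by_cases hvx : v = x
    · exact hvx ▸ (degree_spanningCoe_start_le hp hxy).trans one_le_two
    by_cases hvy : v = y
    · exact hvy ▸ (degree_spanningCoe_end_le hp hxy).trans one_le_two
    have hi0 : i ≠ 0 := fun h => hvx (by rw [← hiv, h, p.getVert_zero])
    have hil : i ≠ p.length := fun h => hvy (by rw [← hiv, h, p.getVert_length])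
    rw [degree_spanningCoe_toSubgraph, ← hiv,
      hp.ncard_neighborSet_toSubgraph_internal_eq_two hi0 (hi.lt_of_ne hil)]
  · rw [degree_spanningCoe_eq_zero hv]
    exact Nat.zero_le 2

end PathDegree

section Potential

variable [Fintype V] {T T' Q : SimpleGraph V}

/-- Convexly increasing in the degrees: minimizing it penalizes vertices of large degree. -/
noncomputable def degreePotential (T : SimpleGraph V) : ℕ := ∑ v, 3 ^ T.degree v

theorem degree_le_of_le_sup (h : T' ≤ T ⊔ Q) (v : V) :
    T'.degree v ≤ T.degree v + Q.degree v := by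
  simp only [← SimpleGraph.card_neighborFinset_eq_degree]
  refine (card_le_card fun w hw => ?_).trans (card_union_le _ _)
  rw [SimpleGraph.mem_neighborFinset] at hw
  simpa only [mem_union, SimpleGraph.mem_neighborFinset, SimpleGraph.sup_adj] using h hw

theorem degree_lt_of_forall_adj {v w : V} (h : ∀ x, T'.Adj v x → T.Adj v x) (hT : T.Adj v w)
    (hT' : ¬ T'.Adj v w) : T'.degree v < T.degree v := by
  refine card_lt_card ((ssubset_iff_of_subset fun x hx => ?_).2 ⟨w, ?_, ?_⟩)
  · rw [SimpleGraph.mem_neighborFinset] at hx ⊢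
    exact h x hx
  · rwa [SimpleGraph.mem_neighborFinset]
  · rwa [SimpleGraph.mem_neighborFinset]

theorem degreePotential_strictMono : StrictMono (degreePotential (V := V)) := by
  intro T T' h
  obtain ⟨hle, hne⟩ := lt_iff_le_and_ne.1 h
  obtain ⟨x, y, hxy, hTxy⟩ : ∃ x y, T'.Adj x y ∧ ¬ T.Adj x y := by
    by_contra! hno
    exact hne (le_antisymm hle hno)
  have hdeg : ∀ v, T.degree v ≤ T'.degree v := fun v =>
    (degree_le_of_le_sup (T := T') (Q := ⊥) (hle.trans le_sup_left) v).trans_eq (by simp)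
  exact sum_lt_sum (fun v _ => Nat.pow_le_pow_right three_pos (hdeg v)) ⟨x, mem_univ x,
    Nat.pow_lt_pow_right (by norm_num) (degree_lt_of_forall_adj (fun _ h => hle h) hxy hTxy)⟩

theorem three_pow_add_le_of_lt {k m d : ℕ} (hm : m < d) (hk : k + 2 ≤ d) :
    3 ^ m + 6 * 3 ^ k ≤ 3 ^ d := by
  obtain ⟨e, rfl⟩ : ∃ e, d = e + 1 := ⟨d - 1, by omega⟩
  have hme : 3 ^ m ≤ 3 ^ e := Nat.pow_le_pow_right three_pos (by omega)
  have hke : 3 ^ (k + 1) ≤ 3 ^ e := Nat.pow_le_pow_right three_pos (by omega)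
  rw [pow_succ] at hke ⊢
  omega

theorem sum_three_pow_lt {d d' : V → ℕ} {b z₁ z₂ : V} {k : ℕ} (hk : 4 * Fintype.card V < 3 ^ k)
    (hb : k + 2 ≤ d b) (hb' : d' b < d b) (hz₁ : d z₁ ≤ k ∧ d' z₁ ≤ d z₁ + 1)
    (hz₂ : d z₂ ≤ k ∧ d' z₂ ≤ d z₂ + 1) (h : ∀ v, v ≠ z₁ → v ≠ z₂ → d' v ≤ d v ∨ d' v ≤ 2) :
    ∑ v, 3 ^ d' v < ∑ v, 3 ^ d v := by
  have hpow : ∀ {m m' : ℕ}, m ≤ m' → 3 ^ m ≤ 3 ^ m' := Nat.pow_le_pow_right three_pos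
  have hgain := three_pow_add_le_of_lt hb' hb
  have hend : ∀ z, d z ≤ k ∧ d' z ≤ d z + 1 → 3 ^ d' z ≤ 3 ^ d z + 2 * 3 ^ k := fun z hz => by
    have h1 := hpow hz.2
    have h2 := hpow hz.1
    rw [pow_succ] at h1
    omega
  have hinner : ∀ v, v ≠ z₁ → v ≠ z₂ → 3 ^ d' v ≤ 3 ^ d v + 8 := fun v h1 h2 => by
    rcases h v h1 h2 with hle | hle
    · exact (hpow hle).trans (Nat.le_add_right _ 8)
    · have := hpow hle
      have := Nat.pow_pos (n := d v) three_pos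
      omega
  have hvertex : ∀ v ∈ univ, 3 ^ d' v + (if v = b then 6 * 3 ^ k else 0) ≤
      3 ^ d v + (if v = z₁ then 2 * 3 ^ k else 0) + (if v = z₂ then 2 * 3 ^ k else 0) + 8 := by
    intro v _
    by_cases hvb : v = b
    · rw [if_pos hvb, hvb]
      omega
    rw [if_neg hvb]
    by_cases h1 : v = z₁
    · have := hend z₁ hz₁
      rw [if_pos h1, h1]
      omega
    by_cases h2 : v = z₂
    · have := hend z₂ hz₂
      rw [if_pos h2, h2]
      omega
    · have := hinner v h1 h2
      omega
  have hsum := sum_le_sum hvertex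
  simp only [sum_add_distrib, sum_ite_eq', mem_univ, if_true, sum_const, smul_eq_mul, card_univ]
    at hsum
  omega

theorem degreePotential_lt_of_le_sup {b c z₁ z₂ : V} {k : ℕ} (hT' : T' ≤ T ⊔ Q)
    (hT : T.Adj b c) (hbc : ¬ T'.Adj b c) (hb : k + 2 ≤ T.degree b) (hQb : Q.degree b = 0)
    (hz₁ : T.degree z₁ ≤ k ∧ Q.degree z₁ ≤ 1) (hz₂ : T.degree z₂ ≤ k ∧ Q.degree z₂ ≤ 1)
    (hQ : ∀ v, v ≠ z₁ → v ≠ z₂ → Q.degree v = 0 ∨ T.degree v = 0 ∧ Q.degree v ≤ 2)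
    (hk : 4 * Fintype.card V < 3 ^ k) : degreePotential T' < degreePotential T := by
  have hdeg := degree_le_of_le_sup hT'
  refine sum_three_pow_lt hk hb ?_ ⟨hz₁.1, (hdeg z₁).trans (Nat.add_le_add_left hz₁.2 _)⟩
    ⟨hz₂.1, (hdeg z₂).trans (Nat.add_le_add_left hz₂.2 _)⟩ fun v h1 h2 => ?_
  · rw [SimpleGraph.degree_eq_zero] at hQb
    exact degree_lt_of_forall_adj (fun x hx => (hT' hx).resolve_right (hQb x)) hT hbc
  · have := hdeg v
    have := hQ v h1 h2
    omega

end Potential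

variable {H T T' : SimpleGraph V} {U : Finset V}

/-- `T` connects any two terminals in `U` that are connected in `H`. -/
def ConnectsTerminals (H : SimpleGraph V) (U : Finset V) (T : SimpleGraph V) : Prop :=
  ∀ u ∈ U, ∀ u' ∈ U, H.Reachable u u' → T.Reachable u u'

/-- `T` is a subgraph of `H` connecting the terminals of `U` wherever `H` does, of minimum
degree potential. -/
structure IsMinSteinerForest [Fintype V] (H : SimpleGraph V) (U : Finset V) (T : SimpleGraph V) :
    Prop where
  le : T ≤ H
  connects : ConnectsTerminals H U T
  potential_le : ∀ T' ≤ H, ConnectsTerminals H U T' → degreePotential T ≤ degreePotential T'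

variable [Fintype V]

theorem exists_isMinSteinerForest (H : SimpleGraph V) (U : Finset V) :
    ∃ T, IsMinSteinerForest H U T := by
  obtain ⟨T, hT, hmin⟩ := Set.exists_min_image {T | T ≤ H ∧ ConnectsTerminals H U T}
    degreePotential (Set.toFinite _) ⟨H, le_rfl, fun _ _ _ _ => id⟩
  exact ⟨T, hT.1, hT.2, fun T' hle hconn => hmin T' ⟨hle, hconn⟩⟩

/-- The vertices of degree at least `k`. -/
noncomputable def highDegree (T : SimpleGraph V) (k : ℕ) : Finset V := {v | k ≤ T.degree v}

/-- The non-root vertices whose parent lies in `B`. -/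
noncomputable def RootedForest.children (P : RootedForest T) (B : Finset V) : Finset V :=
  {c | P.parent c ≠ c ∧ P.parent c ∈ B}

theorem RootedForest.mem_children {P : RootedForest T} {B : Finset V} {c : V} :
    c ∈ P.children B ↔ P.parent c ≠ c ∧ P.parent c ∈ B :=
  mem_filter_univ c

namespace IsMinSteinerForest

theorem eq_of_le (hM : IsMinSteinerForest H U T) (hle : T' ≤ T) (h : ConnectsTerminals H U T') :
    T' = T := by
  by_contra hne
  exact (degreePotential_strictMono (hle.lt_of_ne hne)).not_ge
    (hM.potential_le T' (hle.trans hM.le) h)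

variable {P : RootedForest T} {k : ℕ}

theorem connectsTerminals (hM : IsMinSteinerForest H U T)
    (h : ∀ u ∈ U, T'.Reachable u (P.root u)) : ConnectsTerminals H U T' := fun u hu u' hu' hr => by
  have hroot := P.root_eq_root (hM.connects u hu u' hu' hr)
  exact (h u hu).trans (hroot ▸ (h u' hu').symm)

theorem parent_eq_or_parent_eq (hM : IsMinSteinerForest H U T) {x y : V} (hxy : T.Adj x y) :
    P.parent x = y ∨ P.parent y = x := by
  have hle : SimpleGraph.fromRel (fun a b => P.parent a = b) ≤ T := by
    rintro a b ⟨hab, rfl | rfl⟩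
    · exact P.adj_parent hab.symm
    · exact (P.adj_parent hab).symm
  have heq := hM.eq_of_le hle (hM.connectsTerminals fun u _ =>
    (RootedForest.isAncestor_root (P := P) u).reachable fun v _ _ hv => ⟨hv.symm, Or.inl rfl⟩)
  rw [← heq] at hxy
  exact hxy.2

theorem exists_terminal_below (hM : IsMinSteinerForest H U T) {x : V} (hx : P.parent x ≠ x) :
    ∃ u ∈ U, P.IsAncestor x u := by
  by_contra! hno
  have heq := hM.eq_of_le (SimpleGraph.deleteEdges_le {s(x, P.parent x)})
    (hM.connectsTerminals fun u hu => (RootedForest.isAncestor_root u).reachable fun v hv _ hpv =>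
      RootedForest.adj_parent_deleteEdges hpv fun hvx => ?_)
  · have hdel : ¬ (T.deleteEdges {s(x, P.parent x)}).Adj x (P.parent x) := by
      simp [SimpleGraph.deleteEdges_adj]
    exact hdel (heq.ge (P.adj_parent hx))
  · exact hno u hu (hvx ▸ hv)

theorem degree_eq_zero (hM : IsMinSteinerForest H U T) (hP : ∀ u ∈ U, P.root u ∈ U) {v : V}
    (hv : P.root v ∉ U) : T.degree v = 0 := by
  have hroot_mem : ∀ {x}, P.parent x ≠ x → P.root x ∈ U := fun hx => by
    obtain ⟨u, hu, hxu⟩ := hM.exists_terminal_below hx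
    exact hxu.root_eq ▸ hP u hu
  rw [SimpleGraph.degree_eq_zero]
  intro w hvw
  rcases hM.parent_eq_or_parent_eq (P := P) hvw with h | h
  · exact hv (hroot_mem (h ▸ hvw.ne'))
  · exact hv (P.root_eq_root hvw.reachable ▸ hroot_mem (h ▸ hvw.ne))

theorem root_eq_root (hM : IsMinSteinerForest H U T) {x y : V} (hx : P.root x ∈ U)
    (hy : P.root y ∈ U) (h : H.Reachable x y) : P.root x = P.root y := by
  have hroots : H.Reachable (P.root x) (P.root y) :=
    ((P.reachable_root x).symm.mono hM.le).trans (h.trans ((P.reachable_root y).mono hM.le))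
  rw [← RootedForest.root_root x, ← RootedForest.root_root y]
  exact P.root_eq_root (hM.connects _ hx _ hy hroots)

theorem connectsTerminals_exchange (hM : IsMinSteinerForest H U T) {Q : SimpleGraph V}
    {c z₁ z₂ : V} (hz₁ : P.IsAncestor c z₁) (hz₂ : ¬ P.IsAncestor c z₂)
    (hroot : P.root z₁ = P.root z₂) (hQ : Q.Reachable z₁ z₂) :
    ConnectsTerminals H U (T.deleteEdges {s(c, P.parent c)} ⊔ Q) := by
  set T' := T.deleteEdges {s(c, P.parent c)} ⊔ Q
  have hadj : ∀ {v}, v ≠ c → P.parent v ≠ v → T'.Adj v (P.parent v) := fun hvc hv =>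
    Or.inl (RootedForest.adj_parent_deleteEdges hv hvc)
  have hdown : ∀ {x}, P.IsAncestor c x → T'.Reachable x c := fun hx =>
    hx.reachable fun v _ => hadj
  have hup : ∀ {x}, ¬ P.IsAncestor c x → T'.Reachable x (P.root x) := fun {x} hx =>
    (RootedForest.isAncestor_root x).reachable fun v hv _ => hadj fun hvc => hx (hvc ▸ hv)
  refine hM.connectsTerminals (P := P) fun u _ => ?_
  by_cases hu : P.IsAncestor c u
  · rw [← hu.root_eq, hz₁.root_eq, hroot]
    exact (hdown hu).trans ((hdown hz₁).symm.trans ((hQ.mono le_sup_right).trans (hup hz₂)))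
  · exact hup hu

/-- Otherwise exchanging the edge from `c` to its parent for the path would lower the potential. -/
theorem isAncestor_of_isPath (hM : IsMinSteinerForest H U T) (hP : ∀ u ∈ U, P.root u ∈ U)
    (hk : 4 * Fintype.card V < 3 ^ k) {z₁ z₂ : V} (hz : z₁ ≠ z₂)
    (hz₁ : P.root z₁ ∈ U ∧ z₁ ∉ highDegree T (k + 1))
    (hz₂ : P.root z₂ ∈ U ∧ z₂ ∉ highDegree T (k + 1))
    {p : (isolate H (highDegree T (k + 1))).Walk z₁ z₂} (hp : p.IsPath)
    (hinner : ∀ v ∈ p.support, P.root v ∈ U ∧ v ∉ highDegree T (k + 1) → v = z₁ ∨ v = z₂)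
    {c : V} (hc : P.parent c ≠ c) (hcB : P.parent c ∈ highDegree T (k + 2))
    (hcz : P.IsAncestor c z₁) : P.IsAncestor c z₂ := by
  by_contra hcz₂
  simp only [highDegree, mem_filter_univ, not_le, Nat.lt_succ_iff] at hz₁ hz₂ hcB
  have hQ : p.toSubgraph.spanningCoe ≤ isolate H (highDegree T (k + 1)) :=
    p.toSubgraph.spanningCoe_le
  have hQH := hQ.trans (isolate_le H _)
  have hQ_high : ∀ v, k + 1 ≤ T.degree v → p.toSubgraph.spanningCoe.degree v = 0 := by
    intro v hv
    rw [SimpleGraph.degree_eq_zero]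
    exact fun w hw => (hQ hw).2.1 ((mem_filter_univ v).2 hv)
  have hroot := hM.root_eq_root hz₁.1 hz₂.1 (p.reachable.mono (isolate_le H _))
  refine (hM.potential_le _ (sup_le ((SimpleGraph.deleteEdges_le _).trans hM.le) hQH)
    (hM.connectsTerminals_exchange hcz hcz₂ hroot (reachable_spanningCoe_toSubgraph p))).not_gt ?_
  refine degreePotential_lt_of_le_sup (sup_le_sup_right (SimpleGraph.deleteEdges_le _) _)
    (P.adj_parent hc).symm ?_ hcB (hQ_high _ (Nat.le_of_succ_le hcB))
    ⟨hz₁.2, degree_spanningCoe_start_le hp hz⟩ ⟨hz₂.2, degree_spanningCoe_end_le hp hz⟩ ?_ hk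
  · rintro (h | h)
    · simp [SimpleGraph.deleteEdges_adj, Sym2.eq_swap] at h
    · exact (hQ h).2.1 ((mem_filter_univ _).2 (Nat.le_of_succ_le hcB))
  · intro v hv₁ hv₂
    by_cases hv : v ∈ p.support
    · by_cases hvX : k + 1 ≤ T.degree v
      · exact Or.inl (hQ_high v hvX)
      · refine Or.inr ⟨hM.degree_eq_zero hP fun hvU => ?_, degree_spanningCoe_le_two hp hz v⟩
        exact (hinner v hv ⟨hvU, fun h => hvX ((mem_filter_univ v).1 h)⟩).elim hv₁ hv₂
    · exact Or.inl (degree_spanningCoe_eq_zero hv)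

theorem cutAncestors_eq_of_reachable (hM : IsMinSteinerForest H U T)
    (hP : ∀ u ∈ U, P.root u ∈ U) (hk : 4 * Fintype.card V < 3 ^ k) {x y : V}
    (hx : P.root x ∈ U ∧ x ∉ highDegree T (k + 1)) (hy : P.root y ∈ U ∧ y ∉ highDegree T (k + 1))
    (hxy : (isolate H (highDegree T (k + 1))).Reachable x y) :
    P.cutAncestors (highDegree T (k + 2)) x = P.cutAncestors (highDegree T (k + 2)) y := by
  by_contra hne
  obtain ⟨z₁, z₂, p, hp, hz₁, hz₂, hcut, hinner⟩ := exists_isPath_of_apply_ne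
    (L := fun v => P.root v ∈ U ∧ v ∉ highDegree T (k + 1)) hx hy hne hxy
  have hz : z₁ ≠ z₂ := fun h => hcut (h ▸ rfl)
  have hroot := hM.root_eq_root hz₁.1 hz₂.1 (p.reachable.mono (isolate_le H _))
  obtain ⟨c, hc, hcB, ⟨hcz₁, hcz₂⟩ | ⟨hcz₂, hcz₁⟩⟩ :=
    RootedForest.exists_separating_ancestor hroot hcut
  · exact hcz₂ (hM.isAncestor_of_isPath hP hk hz hz₁ hz₂ hp hinner hc hcB hcz₁)
  · refine hcz₁ (hM.isAncestor_of_isPath hP hk hz.symm hz₂ hz₁ hp.reverse ?_ hc hcB hcz₂)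
    intro v hv hLv
    rw [SimpleGraph.Walk.support_reverse, List.mem_reverse] at hv
    exact (hinner v hv hLv).symm

theorem degree_le_card_children (hM : IsMinSteinerForest H U T) (b : V) :
    T.degree b ≤ #(P.children {b}) + 1 := by
  refine le_trans (card_le_card fun w hw => ?_) (card_insert_le (P.parent b) _)
  rw [SimpleGraph.mem_neighborFinset] at hw
  rw [mem_insert, RootedForest.mem_children, mem_singleton]
  exact (hM.parent_eq_or_parent_eq (P := P) hw).imp Eq.symm fun h =>
    ⟨fun hww => hw.ne (h.symm.trans hww), h⟩

theorem mul_card_le_card_children (hM : IsMinSteinerForest H U T) {B : Finset V}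
    (hB : ∀ b ∈ B, k + 1 ≤ T.degree b) : k * #B ≤ #(P.children B) := by
  refine mul_card_image_le_card_of_maps_to (f := P.parent)
    (fun c hc => (RootedForest.mem_children.1 hc).2) k fun b hb => ?_
  refine (Nat.le_of_add_le_add_right
    ((hB b hb).trans (hM.degree_le_card_children (P := P) b))).trans (card_le_card fun c hc => ?_)
  obtain ⟨hpc, hcb⟩ := RootedForest.mem_children.1 hc
  rw [mem_singleton] at hcb
  exact mem_filter.2 ⟨RootedForest.mem_children.2 ⟨hpc, hcb ▸ hb⟩, hcb⟩

/-- Cutting below the vertices of `B` splits off a piece for every child of `B`, and every piece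
contains a terminal or a vertex of `B`. -/
theorem card_image_root_add_le (hM : IsMinSteinerForest H U T) {B X : Finset V} (hBX : B ⊆ X)
    (hB : ∀ b ∈ B, k + 1 ≤ T.degree b) :
    #(U.image P.root) + k * #B ≤ #X + #((U \ X).image (P.cutAncestors B)) := by
  have hdisj : Disjoint (U.image P.root) (P.children B) := by
    rw [disjoint_left]
    intro x hx hxc
    obtain ⟨u, -, rfl⟩ := mem_image.1 hx
    exact (RootedForest.mem_children.1 hxc).1 (RootedForest.parent_root u)
  have hcut : ∀ c ∈ U.image P.root ∪ P.children B,
      (P.parent c = c ∨ P.parent c ∈ B) ∧ ∃ u ∈ U, P.IsAncestor c u := by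
    intro c hc
    rcases mem_union.1 hc with hc | hc
    · obtain ⟨u, hu, rfl⟩ := mem_image.1 hc
      exact ⟨Or.inl (RootedForest.parent_root u), u, hu, RootedForest.isAncestor_root u⟩
    · obtain ⟨hpc, hpB⟩ := RootedForest.mem_children.1 hc
      exact ⟨Or.inr hpB, hM.exists_terminal_below hpc⟩
  have hsub : (U.image P.root ∪ P.children B).image (P.cutAncestors B) ⊆
      X.image (P.cutAncestors B) ∪ (U \ X).image (P.cutAncestors B) := by
    intro s hs
    obtain ⟨c, hc, rfl⟩ := mem_image.1 hs
    obtain ⟨-, u, hu, hcu⟩ := hcut c hc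
    rw [← image_union, union_sdiff_self_eq_union]
    rcases RootedForest.cutAncestors_eq_or_exists_mem (B := B) hcu with h | ⟨b, hb, h⟩
    · exact mem_image.2 ⟨u, mem_union_right _ hu, h⟩
    · exact mem_image.2 ⟨b, mem_union_left _ (hBX hb), h⟩
  calc #(U.image P.root) + k * #B
      ≤ #(U.image P.root ∪ P.children B) := by
        rw [card_union_of_disjoint hdisj]
        exact Nat.add_le_add_left (hM.mul_card_le_card_children hB) _
    _ = #((U.image P.root ∪ P.children B).image (P.cutAncestors B)) :=
        (card_image_of_injOn (RootedForest.injOn_cutAncestors.mono fun c hc => (hcut c hc).1)).symm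
    _ ≤ #X + #((U \ X).image (P.cutAncestors B)) :=
        (card_le_card hsub).trans ((card_union_le _ _).trans
          (Nat.add_le_add_right card_image_le _))

theorem mul_card_highDegree_le (hM : IsMinSteinerForest H U T) {r : ℕ} (hr : IsRobust r H U)
    (hk : 4 * Fintype.card V < 3 ^ k) :
    (k + 1) * #(highDegree T (k + 2)) ≤ (r + 1) * #(highDegree T (k + 1)) := by
  obtain ⟨P, hP⟩ := exists_rootedForest T U
  set X := highDegree T (k + 1)
  set B := highDegree T (k + 2)
  have hBX : B ⊆ X := fun v hv =>
    (mem_filter_univ v).2 (Nat.le_of_succ_le ((mem_filter_univ v).1 hv))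
  have hcount := hM.card_image_root_add_le (P := P) hBX fun b hb => (mem_filter_univ b).1 hb
  have hpieces : #((U \ X).image (P.cutAncestors B)) ≤ numComponents H U X :=
    card_image_le_card_image fun x hx y hy hxy => by
      rw [mem_sdiff] at hx hy
      exact hM.cutAncestors_eq_of_reachable hP hk ⟨hP x hx.1, hx.2⟩ ⟨hP y hy.1, hy.2⟩
        (SimpleGraph.ConnectedComponent.eq.1 hxy)
  have hroots : numComponents H U ∅ ≤ #(U.image P.root) := by
    rw [numComponents, sdiff_empty, isolate_empty]
    refine card_image_le_card_image fun x _ y _ hxy => SimpleGraph.ConnectedComponent.eq.2 ?_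
    have hx := (P.reachable_root x).mono hM.le
    have hy := (P.reachable_root y).mono hM.le
    exact hx.trans (hxy ▸ hy.symm)
  have := hr X
  rw [add_mul r, one_mul]
  omega

end IsMinSteinerForest

theorem exists_succ_le_two_mul {a : ℕ → ℕ} {p : ℕ} (h0 : 0 < a 0) (hp : a p < 2 ^ p) :
    ∃ j < p, a (j + 1) ≤ 2 * a j := by
  by_contra! hno
  have hpow : ∀ j ≤ p, 2 ^ j ≤ a j := by
    intro j hj
    induction j with
    | zero => exact h0
    | succ j ih =>
      have := ih (by omega)
      have := hno j hj
      rw [pow_succ]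
      omega
  exact (hpow p le_rfl).not_gt hp

/-- A large set of high-degree vertices cannot keep growing by a factor of two as the degree
threshold decreases. -/
theorem IsMinSteinerForest.degree_lt (hM : IsMinSteinerForest H U T) {r p : ℕ}
    (hr : IsRobust r H U) (hp : Fintype.card V < 2 ^ p) (v : V) :
    T.degree v < 2 * p + 2 * r + 4 := by
  by_contra! hv
  have hpos : ∀ j, 0 < #(highDegree T (2 * p + 2 * r + 4 - j)) := fun j =>
    card_pos.2 ⟨v, (mem_filter_univ v).2 (by omega)⟩
  obtain ⟨j, hj, hcard⟩ := exists_succ_le_two_mul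
    (a := fun j => #(highDegree T (2 * p + 2 * r + 4 - j))) (hpos 0) ((card_le_univ _).trans_lt hp)
  obtain ⟨k, hk⟩ : ∃ k, 2 * p + 2 * r + 4 - j = k + 2 := ⟨2 * p + 2 * r + 2 - j, by omega⟩
  have hk' : 2 * p + 2 * r + 4 - (j + 1) = k + 1 := by omega
  have hV : 4 * Fintype.card V < 3 ^ k := by
    calc 4 * Fintype.card V < 2 ^ (p + 2) := by
          rw [pow_add]
          omega
      _ ≤ 2 ^ k := Nat.pow_le_pow_right two_pos (by omega)
      _ ≤ 3 ^ k := Nat.pow_le_pow_left (by norm_num) k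
  have hB := hpos j
  have hdense := hM.mul_card_highDegree_le hr hV
  rw [hk] at hB hcard
  rw [hk'] at hcard
  have hthreshold : 2 * (r + 1) + 1 ≤ k + 1 := by omega
  nlinarith [Nat.mul_le_mul_right #(highDegree T (k + 2)) hthreshold,
    Nat.mul_le_mul_left (r + 1) hcard]

theorem exists_walk_list (hM : IsMinSteinerForest H U T) (u : V) :
    ∃ l : List V, l.IsChain H.Adj ∧ (∀ x ∈ l, H.Reachable u x) ∧
      (∀ w ∈ U, H.Reachable u w → w ∈ l) ∧ ∀ x, l.count x ≤ T.degree x + 1 := by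
  by_cases hu : ∃ w ∈ U, H.Reachable u w
  swap
  · exact ⟨[], .nil, by simp, fun w hw h => absurd ⟨w, hw, h⟩ hu, by simp⟩
  obtain ⟨w, hw, huw⟩ := hu
  obtain ⟨P, hP⟩ := exists_rootedForest T U
  set A : Finset V := {x | P.root x = P.root w ∧ x ≠ P.root w}
  have hroot_mem : ∀ {x}, x ∈ insert (P.root w) A ↔ P.root x = P.root w := fun {x} => by
    rw [mem_insert, mem_filter_univ]
    refine ⟨?_, fun h => ?_⟩
    · rintro (rfl | h)
      · exact RootedForest.root_root w
      · exact h.1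
    · exact (em _).imp_right fun hx => ⟨h, hx⟩
  have hparent : ∀ {x}, x ∈ A → P.parent x ≠ x := fun hx h => by
    obtain ⟨hxw, hne⟩ := (mem_filter_univ _).1 hx
    exact hne (hxw ▸ (P.root_eq_self h).symm)
  obtain ⟨l, hchain, hmem, hcount⟩ := P.exists_eulerTour (ρ := P.root w) (A := A) (by simp [A])
    fun x hx => ⟨hparent hx, hroot_mem.2
      ((P.root_eq_root (P.adj_parent (hparent hx)).reachable).symm.trans
        ((mem_filter_univ x).1 hx).1)⟩
  refine ⟨l, hchain.imp fun _ _ h => hM.le h, fun x hx => ?_, fun x hx hux => ?_, fun x => ?_⟩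
  · have hxw := hroot_mem.1 ((hmem x).1 hx)
    have hx := (P.reachable_root x).mono hM.le
    exact huw.trans (((P.reachable_root w).mono hM.le).trans (hxw ▸ hx.symm))
  · exact (hmem x).2 (hroot_mem.2 (hM.root_eq_root (hP x hx) (hP w hw) (hux.symm.trans huw)))
  · refine (hcount x).trans ((add_comm 1 _).trans_le (Nat.add_le_add_right (card_le_card ?_) 1))
    intro c hc
    obtain ⟨hcA, rfl⟩ := mem_filter.1 hc
    rw [SimpleGraph.mem_neighborFinset]
    exact (P.adj_parent (hparent hcA)).symm

theorem IsRobust.exists_walk_lists {r p : ℕ} (hr : IsRobust r H U) (hp : Fintype.card V < 2 ^ p) :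
    ∃ lst : V → List V, ∀ u, (lst u).IsChain H.Adj ∧ (∀ x ∈ lst u, H.Reachable u x) ∧
      (∀ w ∈ U, H.Reachable u w → w ∈ lst u) ∧ ∀ x, (lst u).count x ≤ 2 * p + 2 * r + 4 := by
  obtain ⟨T, hM⟩ := exists_isMinSteinerForest H U
  choose lst hchain hreach hmem hcount using exists_walk_list hM
  exact ⟨lst, fun u => ⟨hchain u, hreach u, hmem u, fun x =>
    (hcount u x).trans (hM.degree_lt hr hp x)⟩⟩

end SteinerForest

section ClusterHierarchy

/-- `(j, c)` names the connected component, with representative `c`, of the subgraph spanned by the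
vertices of level at most `j`. -/
abbrev Cluster (V : Type*) (p : ℕ) := Fin p × V

/-- The vertices of `G` are sorted into `p` levels, and `root j x` represents the component of `x`
among the vertices of level at most `j`. The walk `tour Γ` stays in the cluster `Γ`, visits the
vertices of `Γ` of top level, and visits no vertex more than `Δ` times. -/
structure ClusterHierarchy {V : Type*} [Fintype V] (G : SimpleGraph V) (p Δ : ℕ) where
  level : V → Fin p
  root : Fin p → V → V
  tour : Cluster V p → List V
  root_eq_of_adj : ∀ j x y, G.Adj x y → level x ≤ j → level y ≤ j → root j x = root j y
  reachable_of_root_eq : ∀ j x y, root j x = root j y →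
    (isolate G (univ.filter fun v => j < level v)).Reachable x y
  isChain_tour : ∀ Γ, (tour Γ).IsChain G.Adj
  mem_of_mem_tour : ∀ Γ, ∀ x ∈ tour Γ, level x ≤ Γ.1 ∧ root Γ.1 x = Γ.2
  mem_tour_root : ∀ y, y ∈ tour (level y, root (level y) y)
  count_tour_le : ∀ Γ x, (tour Γ).count x ≤ Δ

namespace ClusterHierarchy

variable {V : Type*} [Fintype V] {G : SimpleGraph V} {p Δ : ℕ} (S : ClusterHierarchy G p Δ)
  {Γ Γ' : Cluster V p} {B : Finset V} {x y z : V}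

/-- Membership of a vertex in a cluster. -/
def Mem (Γ : Cluster V p) (x : V) : Prop := S.level x ≤ Γ.1 ∧ S.root Γ.1 x = Γ.2

/-- The smallest cluster containing `y`. -/
def home (y : V) : Cluster V p := (S.level y, S.root (S.level y) y)

/-- `z` lies above the level of `Γ` and is adjacent in `G` to a member of `Γ`. -/
def IsNeighbor (Γ : Cluster V p) (z : V) : Prop := Γ.1 < S.level z ∧ ∃ x, S.Mem Γ x ∧ G.Adj x z

/-- A cluster is affected by `B`, which will consist of the faults and the two query vertices, if
it meets `B`. -/
def Affected (B : Finset V) (Γ : Cluster V p) : Prop := ∃ w ∈ B, S.Mem Γ w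

theorem mem_home (y : V) : S.Mem (S.home y) y := ⟨le_rfl, rfl⟩

variable {S}

theorem Mem.of_closed {P : V → Prop} (hx : S.Mem Γ x) (hy : S.Mem Γ y)
    (hP : ∀ u v, S.Mem Γ u → S.Mem Γ v → G.Adj u v → P u → P v) (h : P x) : P y := by
  obtain ⟨walk⟩ := S.reachable_of_root_eq Γ.1 x y (hx.2.trans hy.2.symm)
  clear hy
  induction walk with
  | nil => exact h
  | cons e _ ih =>
    obtain ⟨hadj, hu, hv⟩ := e
    simp only [mem_filter, mem_univ, true_and, not_lt] at hu hv
    have hm : S.Mem Γ _ := ⟨hv, by rw [← S.root_eq_of_adj Γ.1 _ _ hadj hu hv, hx.2]⟩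
    exact ih hm (hP _ _ hx hm hadj h)

theorem Mem.root_eq (hx : S.Mem Γ x) (hy : S.Mem Γ y) {j : Fin p} (hj : Γ.1 ≤ j) :
    S.root j x = S.root j y :=
  hx.of_closed hy (P := fun v => S.root j x = S.root j v)
    (fun u v hu hv huv h => h.trans (S.root_eq_of_adj j u v huv (hu.1.trans hj) (hv.1.trans hj)))
    rfl

theorem Mem.of_home (hx : S.Mem Γ x) (hy : S.Mem (S.home x) y) : S.Mem Γ y :=
  ⟨hy.1.trans hx.1, by rw [hy.root_eq (S.mem_home x) hx.1, hx.2]⟩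

theorem Mem.home_eq (hy : S.Mem Γ y) (h : S.level y = Γ.1) : S.home y = Γ := by
  unfold home
  rw [h, hy.2]

theorem Mem.mem_or_isNeighbor (hx : S.Mem Γ x) (h : G.Adj x z) :
    S.Mem Γ z ∨ S.IsNeighbor Γ z := by
  by_cases hz : S.level z ≤ Γ.1
  · exact .inl ⟨hz, by rw [← S.root_eq_of_adj Γ.1 x z h hx.1 hz, hx.2]⟩
  · exact .inr ⟨lt_of_not_ge hz, x, hx, h⟩

theorem IsNeighbor.mem_of_mem (hz : S.IsNeighbor Γ z) (hz' : S.Mem Γ' z) (hx : S.Mem Γ x) :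
    S.Mem Γ' x := by
  obtain ⟨hlt, x₀, hx₀, hadj⟩ := hz
  have hle : Γ.1 ≤ Γ'.1 := hlt.le.trans hz'.1
  refine ⟨hx.1.trans hle, ?_⟩
  rw [hx.root_eq hx₀ hle, ← hz'.2]
  exact S.root_eq_of_adj _ _ _ hadj (hx₀.1.trans hle) hz'.1

theorem Affected.of_isNeighbor (hΓ : S.Affected B Γ) (hz : S.IsNeighbor Γ z)
    (hz' : S.Mem Γ' z) : S.Affected B Γ' :=
  let ⟨w, hw, hm⟩ := hΓ
  ⟨w, hw, hz.mem_of_mem hz' hm⟩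

theorem Affected.of_mem (hy : S.Affected B (S.home y)) (hm : S.Mem Γ y) : S.Affected B Γ :=
  let ⟨w, hw, hm'⟩ := hy
  ⟨w, hw, hm.of_home hm'⟩

theorem affected_home (hy : y ∈ B) : S.Affected B (S.home y) := ⟨y, hy, S.mem_home y⟩

variable (S) in
theorem card_affected_le (B : Finset V) : #{Γ | S.Affected B Γ} ≤ #B * p := by
  have hsub : univ.filter (S.Affected B) ⊆
      (B ×ˢ (univ : Finset (Fin p))).image fun q => (q.2, S.root q.2 q.1) := by
    intro Γ hΓ
    obtain ⟨w, hw, hm⟩ := (mem_filter.1 hΓ).2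
    exact mem_image.2 ⟨(w, Γ.1), by simp [hw], by simp only [hm.2]⟩
  calc #{Γ | S.Affected B Γ} ≤ #(B ×ˢ (univ : Finset (Fin p))) :=
        (card_le_card hsub).trans card_image_le
    _ = #B * p := by rw [card_product, card_univ, Fintype.card_fin]

end ClusterHierarchy

/-- A potential edge `(x, z, o)` of the auxiliary multigraph: an edge of `G` if `o = none`, and a
shortcut between two neighbours of the cluster `Γ` if `o = some Γ`. -/
abbrev AuxEdge (V : Type*) (p : ℕ) := V × V × Option (Cluster V p)

namespace ClusterHierarchy

variable {V : Type*} [Fintype V] {G : SimpleGraph V} {p Δ : ℕ} {S : ClusterHierarchy G p Δ}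
  {Γ Γ' : Cluster V p} {B F : Finset V} {x y z : V} {o : Option (Cluster V p)}

variable (S) in
/-- `e` belongs to the auxiliary multigraph of `S`. -/
def IsAuxEdge (e : AuxEdge V p) : Prop :=
  match e.2.2 with
  | none => G.Adj e.1 e.2.1
  | some Γ => S.IsNeighbor Γ e.1 ∧ S.IsNeighbor Γ e.2.1

theorem IsAuxEdge.symm (h : S.IsAuxEdge (x, z, o)) : S.IsAuxEdge (z, x, o) := by
  cases o with
  | none => exact SimpleGraph.Adj.symm h
  | some Γ => exact ⟨h.2, h.1⟩

variable (S) in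
/-- An invariant of walks of `G - F` from `P`: the current vertex is in `P`, or it lies in an
unaffected cluster which has a neighbour in `P`. -/
def Reached (B : Finset V) (P : Set V) (y : V) : Prop :=
  y ∈ P ∨ ¬ S.Affected B (S.home y) ∧
    ∃ Γ, ¬ S.Affected B Γ ∧ S.Mem Γ y ∧ ∃ x ∈ P, S.IsNeighbor Γ x

theorem reached_of_adj {P : Set V} {u v : V} (hP : ∀ x ∈ P, S.Affected B (S.home x))
    (huv : G.Adj u v) (hv : ¬ S.Affected B (S.home v)) (hu : S.Reached B P u) :
    S.Reached B P v := by
  refine .inr ⟨hv, ?_⟩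
  rcases hu with hu | ⟨_, Γ, hΓ, huΓ, x, hx, hxΓ⟩
  · refine ⟨S.home v, hv, S.mem_home v, u, hu, ?_⟩
    exact ((S.mem_home v).mem_or_isNeighbor huv.symm).resolve_left fun h => hv ((hP u hu).of_mem h)
  · rcases huΓ.mem_or_isNeighbor huv with hvΓ | hvΓ
    · exact ⟨Γ, hΓ, hvΓ, x, hx, hxΓ⟩
    · obtain ⟨_, x₀, hx₀, hadj⟩ := hxΓ
      refine ⟨S.home v, hv, S.mem_home v, x, hx, ?_⟩
      exact ((hvΓ.mem_of_mem (S.mem_home v) hx₀).mem_or_isNeighbor hadj).resolve_left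
        fun h => hv ((hP x hx).of_mem h)

/-- A walk of `G - F` between vertices with affected homes is shortened to auxiliary edges by
skipping its excursions through unaffected clusters. -/
theorem mem_of_reachable {P : Set V}
    (hP : ∀ x ∈ P, S.Affected B (S.home x))
    (hclosed : ∀ e : AuxEdge V p, S.IsAuxEdge e → (∀ Γ, e.2.2 = some Γ → ¬ S.Affected B Γ) →
      e.1 ∈ P → e.2.1 ∉ F → S.Affected B (S.home e.2.1) → e.2.1 ∈ P)
    {s t : V} (hs : s ∈ P) (ht : S.Affected B (S.home t))
    (hst : (isolate G F).Reachable s t) : t ∈ P := by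
  have hstep : ∀ u v, (isolate G F).Adj u v → S.Reached B P u → S.Reached B P v := by
    rintro u v ⟨huv, _, hvF⟩ hu
    by_cases hv : S.Affected B (S.home v)
    · rcases hu with hu' | ⟨_, Γ, hΓ, huΓ, x, hx, hxΓ⟩
      · exact .inl (hclosed (u, v, none) huv (by simp) hu' hvF hv)
      · have hvΓ := (huΓ.mem_or_isNeighbor huv).resolve_left fun h => hΓ (hv.of_mem h)
        exact .inl (hclosed (x, v, some Γ) ⟨hxΓ, hvΓ⟩ (by simpa using hΓ) hx hvF hv)
    · exact reached_of_adj hP huv hv hu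
  have hreach : S.Reached B P t := by
    have hs' : S.Reached B P s := .inl hs
    clear hs
    obtain ⟨walk⟩ := hst
    induction walk with
    | nil => exact hs'
    | cons e _ ih => exact ih ht (hstep _ _ e hs')
  exact hreach.resolve_right fun h => h.1 ht

end ClusterHierarchy
end ClusterHierarchy

section Checksum

variable {V : Type*} [Fintype V]

theorem sum_eq_zero_of_fiberwise {κ M : Type*} [DecidableEq κ] [AddCommMonoid M]
    {s : Finset V} {g : V → κ} {F : V → M} (hs : ∀ y ∈ s, ∀ y', g y' = g y → y' ∈ s)
    (h : ∀ y ∈ s, ∑ y' with g y' = g y, F y' = 0) : ∑ y ∈ s, F y = 0 := by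
  rw [← sum_fiberwise_of_maps_to (t := s.image g) (g := g) fun _ => mem_image_of_mem g]
  refine sum_eq_zero fun k hk => ?_
  obtain ⟨y, hy, rfl⟩ := mem_image.1 hk
  rw [← h y hy]
  refine sum_congr (ext fun y' => ?_) fun _ _ => rfl
  simp only [mem_filter, mem_univ, true_and, and_iff_right_iff_imp]
  exact hs y hy y'

/-- The indicator of a proposition with values in `ZMod 2`. -/
noncomputable def bit (P : Prop) : ZMod 2 := if P then 1 else 0

/-- A random sample of vertices and of clusters; an auxiliary edge survives if both of its
endpoints, and its cluster if it has one, are sampled. -/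
structure Sample (V : Type*) (p : ℕ) where
  vertices : Set V
  clusters : Set (Cluster V p)

namespace ClusterHierarchy

variable {G : SimpleGraph V} {p Δ : ℕ} {S : ClusterHierarchy G p Δ} {X : Sample V p}
  {h : AuxEdge V p → ZMod 2} {Γ : Cluster V p} {B F : Finset V} {y z : V}

variable (S X h)

/-- The auxiliary edge `e` is present in the sample `X`. -/
def IsActive (e : AuxEdge V p) : Prop :=
  e.1 ∈ X.vertices ∧ e.2.1 ∈ X.vertices ∧ S.IsAuxEdge e ∧ ∀ Γ, e.2.2 = some Γ → Γ ∈ X.clusters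

/-- The number modulo two of active edges at `y`, weighted by `h`. -/
noncomputable def weightedDegree (y : V) : ZMod 2 :=
  ∑ e : AuxEdge V p, if S.IsActive X e then h e * (bit (e.1 = y) + bit (e.2.1 = y)) else 0

/-- A chosen sampled neighbour of the cluster `Γ`. -/
noncomputable def anchor (Γ : Cluster V p) : Option V :=
  if hz : ∃ z ∈ X.vertices, S.IsNeighbor Γ z then some hz.choose else none

/-- The vertex to which `y` forwards its load, see `ClusterHierarchy.load`. -/
noncomputable def next (y : V) : Option V := S.anchor X (S.home y)

variable {S X h}

theorem anchor_eq_some (hz : S.anchor X Γ = some z) : z ∈ X.vertices ∧ S.IsNeighbor Γ z := by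
  unfold anchor at hz
  split_ifs at hz with hex
  exact Option.some.inj hz ▸ hex.choose_spec

theorem anchor_eq_none (hΓ : S.anchor X Γ = none) (hz : z ∈ X.vertices) :
    ¬ S.IsNeighbor Γ z := fun hn => by
  simp [anchor, show ∃ z ∈ X.vertices, S.IsNeighbor Γ z from ⟨z, hz, hn⟩] at hΓ

theorem level_lt_of_next_eq (hy : S.next X y = some z) : S.level y < S.level z :=
  (anchor_eq_some hy).2.1

theorem Affected.of_next (hy : S.Affected B (S.home y)) (hz : S.next X y = some z) :
    S.Affected B (S.home z) :=
  hy.of_isNeighbor (anchor_eq_some hz).2 (S.mem_home z)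

variable (S X h)

/-- Weighted degrees are accumulated along `next`, up the levels of the hierarchy. -/
noncomputable def load (y : V) : ZMod 2 :=
  S.weightedDegree X h y + ∑ y' : {y' // S.next X y' = some y}, load y'.1
termination_by S.level y
decreasing_by exact level_lt_of_next_eq y'.2

theorem load_eq (y : V) :
    S.load X h y = S.weightedDegree X h y + ∑ y' with S.next X y' = some y, S.load X h y' := by
  rw [load, ← sum_subtype {y' | S.next X y' = some y} (by simp) (S.load X h)]

variable {S} in
theorem level_induction {P : V → Prop}
    (ih : ∀ y, (∀ y', S.next X y' = some y → P y') → P y) (y : V) : P y := by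
  induction hk : S.level y using WellFoundedLT.induction generalizing y with
  | _ k ih' => exact ih y fun y' hy' => ih' _ (hk ▸ level_lt_of_next_eq hy') y' rfl

theorem weightedDegree_add (h' : AuxEdge V p → ZMod 2) (y : V) :
    S.weightedDegree X (h + h') y = S.weightedDegree X h y + S.weightedDegree X h' y := by
  simp only [weightedDegree, Pi.add_apply, ← sum_add_distrib]
  refine sum_congr rfl fun e _ => ?_
  split_ifs
  · ring
  · simp

theorem load_add (h' : AuxEdge V p → ZMod 2) (y : V) :
    S.load X (h + h') y = S.load X h y + S.load X h' y := by
  induction y using level_induction (S := S) X with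
  | ih y ih =>
    rw [load_eq, load_eq, load_eq, weightedDegree_add,
      sum_congr rfl fun y' hy' => ih y' (mem_filter.1 hy').2, sum_add_distrib]
    ring

theorem weightedDegree_single {e : AuxEdge V p} (he : S.IsActive X e) (y : V) :
    S.weightedDegree X (Pi.single e 1) y = bit (e.1 = y) + bit (e.2.1 = y) := by
  rw [weightedDegree, sum_eq_single e (fun e' _ hne => by simp [hne]) (by simp)]
  simp [he]

/-- Each active edge contributes twice, hence `0`, to the total degree of a set it does not
leave. -/
theorem sum_weightedDegree_eq_zero {s : Finset V}
    (hs : ∀ e, S.IsActive X e → (e.1 ∈ s ↔ e.2.1 ∈ s)) :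
    ∑ y ∈ s, S.weightedDegree X h y = 0 := by
  unfold weightedDegree
  rw [sum_comm]
  refine sum_eq_zero fun e _ => ?_
  by_cases he : S.IsActive X e
  · simp only [he, if_true, ← mul_sum, sum_add_distrib, bit, sum_ite_eq, hs e he]
    rw [CharTwo.add_self_eq_zero, mul_zero]
  · simp [he]

/-- Summation by parts along `next`. -/
theorem sum_add_next_mul_load (a : V → ZMod 2) :
    ∑ y, (a y + (S.next X y).elim 0 a) * S.load X h y =
      ∑ y, a y * S.weightedDegree X h y := by
  have hswap : ∑ y, a y * ∑ y' with S.next X y' = some y, S.load X h y' =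
      ∑ y, (S.next X y).elim 0 a * S.load X h y := by
    simp only [mul_sum, sum_filter]
    rw [sum_comm]
    refine sum_congr rfl fun y _ => ?_
    cases S.next X y <;> simp
  have hload : ∑ y, a y * S.load X h y = ∑ y, a y * S.weightedDegree X h y +
      ∑ y, (S.next X y).elim 0 a * S.load X h y := by
    rw [← hswap, ← sum_add_distrib]
    exact sum_congr rfl fun y _ => by rw [load_eq, mul_add]
  simp only [add_mul, sum_add_distrib]
  rw [hload, add_assoc, CharTwo.add_self_eq_zero, add_zero]

/-- The part of the sum in `sum_add_next_mul_load` that only involves affected clusters. It can be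
evaluated from the labels of `B`. -/
noncomputable def checksum (B : Finset V) (a : V → ZMod 2) : ZMod 2 :=
  ∑ y with S.Affected B (S.home y), (a y + (S.next X y).elim 0 a) * S.load X h y

theorem checksum_congr {a a' : V → ZMod 2}
    (haa' : ∀ y, S.Affected B (S.home y) → a y = a' y) :
    S.checksum X h B a = S.checksum X h B a' := by
  refine sum_congr rfl fun y hy => ?_
  rw [mem_filter] at hy
  cases hz : S.next X y with
  | none => simp only [haa' y hy.2, Option.elim_none]
  | some z => simp only [haa' y hy.2, haa' z (hy.2.of_next hz), Option.elim_some]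

theorem checksum_add (h' : AuxEdge V p → ZMod 2) (B : Finset V) (a : V → ZMod 2) :
    S.checksum X (h + h') B a = S.checksum X h B a + S.checksum X h' B a := by
  simp only [checksum, load_add, mul_add, sum_add_distrib]

theorem load_single_eq_zero {e : AuxEdge V p} (he : S.IsActive X e)
    (h₁ : S.Affected B (S.home e.1)) (h₂ : S.Affected B (S.home e.2.1))
    (hy : ¬ S.Affected B (S.home y)) : S.load X (Pi.single e 1) y = 0 := by
  induction y using level_induction (S := S) X with
  | ih y ih =>
    have hne₁ : e.1 ≠ y := fun heq => hy (heq ▸ h₁)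
    have hne₂ : e.2.1 ≠ y := fun heq => hy (heq ▸ h₂)
    rw [load_eq, weightedDegree_single S X he, sum_eq_zero fun y' hy' => ?_]
    · simp [bit, hne₁, hne₂]
    · have hnext := (mem_filter.1 hy').2
      exact ih y' hnext fun hy'' => hy (hy''.of_next hnext)

theorem checksum_single {e : AuxEdge V p} (he : S.IsActive X e)
    (h₁ : S.Affected B (S.home e.1)) (h₂ : S.Affected B (S.home e.2.1)) (a : V → ZMod 2) :
    S.checksum X (Pi.single e 1) B a = a e.1 + a e.2.1 := by
  have hall : S.checksum X (Pi.single e 1) B a =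
      ∑ y, (a y + (S.next X y).elim 0 a) * S.load X (Pi.single e 1) y := by
    refine sum_subset (filter_subset _ _) fun y _ hy => ?_
    rw [load_single_eq_zero S X he h₁ h₂ (by simpa using hy), mul_zero]
  rw [hall, sum_add_next_mul_load]
  simp [weightedDegree_single S X he, bit, mul_add, sum_add_distrib]

variable {S X}

theorem Mem.iff_of_isActive (hΓ : S.anchor X Γ = none) {e : AuxEdge V p}
    (he : S.IsActive X e) : S.Mem Γ e.1 ↔ S.Mem Γ e.2.1 := by
  have hforward : ∀ x z o, z ∈ X.vertices → S.IsAuxEdge (x, z, o) → S.Mem Γ x → S.Mem Γ z := by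
    rintro x z (_ | Γ') hz hedge hx
    · exact (hx.mem_or_isNeighbor hedge).resolve_right (anchor_eq_none hΓ hz)
    · obtain ⟨x₀, hx₀, hadj⟩ := hedge.2.2
      exact ((hedge.1.mem_of_mem hx hx₀).mem_or_isNeighbor hadj).resolve_right
        (anchor_eq_none hΓ hz)
  exact ⟨hforward _ _ e.2.2 he.2.1 he.2.2.1, hforward _ _ e.2.2 he.1 he.2.2.1.symm⟩

theorem Mem.iff_of_next (hΓ : S.anchor X Γ = none) (hz : S.next X y = some z) :
    S.Mem Γ y ↔ S.Mem Γ z := by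
  obtain ⟨hzX, hn⟩ := anchor_eq_some hz
  refine ⟨fun hy => ?_, fun hz' => hn.mem_of_mem hz' (S.mem_home y)⟩
  obtain ⟨_, x₀, hx₀, hadj⟩ := hn
  exact ((hy.of_home hx₀).mem_or_isNeighbor hadj).resolve_right (anchor_eq_none hΓ hzX)

/-- A vertex contributes to `sum_add_next_mul_load` for the indicator of an invariant set only if
it forwards its load nowhere. -/
theorem bit_add_next_mul_load {A : Finset V} (hA : ∀ z, S.next X y = some z → (y ∈ A ↔ z ∈ A)) :
    (bit (y ∈ A) + (S.next X y).elim 0 fun z => bit (z ∈ A)) * S.load X h y =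
      if y ∈ A ∧ S.next X y = none then S.load X h y else 0 := by
  cases hz : S.next X y with
  | none => by_cases hy : y ∈ A <;> simp [bit, hy]
  | some z => simp [← hA z hz, CharTwo.add_self_eq_zero]

theorem sum_bit_add_next_mul_load_eq_zero {A : Finset V}
    (hA : ∀ e, S.IsActive X e → (e.1 ∈ A ↔ e.2.1 ∈ A)) :
    ∑ y, (bit (y ∈ A) + (S.next X y).elim 0 fun z => bit (z ∈ A)) * S.load X h y = 0 := by
  rw [S.sum_add_next_mul_load X h fun y => bit (y ∈ A), ← S.sum_weightedDegree_eq_zero X h hA]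
  simp [bit]

theorem sum_load_eq_zero (hΓ : S.anchor X Γ = none) :
    ∑ y with S.home y = Γ, S.load X h y = 0 := by
  induction hk : Γ.1 using WellFoundedLT.induction generalizing Γ with
  | _ k ih =>
    let A : Finset V := univ.filter (S.Mem Γ)
    have memA (y : V) : y ∈ A ↔ S.Mem Γ y := by simp [A]
    have htotal : ∑ y with y ∈ A ∧ S.next X y = none, S.load X h y = 0 := by
      rw [sum_filter, ← sum_congr rfl fun y _ => bit_add_next_mul_load h fun z hz =>
        (memA y).trans <| (Mem.iff_of_next hΓ hz).trans (memA z).symm]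
      exact sum_bit_add_next_mul_load_eq_zero h fun e he =>
        (memA e.1).trans <| (Mem.iff_of_isActive hΓ he).trans (memA e.2.1).symm
    have hlower : ∑ y with (y ∈ A ∧ S.next X y = none) ∧ S.home y ≠ Γ, S.load X h y = 0 := by
      refine sum_eq_zero_of_fiberwise (g := S.home) (fun y hy y' hy' => ?_) fun y hy => ?_
      all_goals
        simp only [mem_filter, mem_univ, true_and, memA] at hy ⊢
        obtain ⟨⟨hyΓ, hnext⟩, hne⟩ := hy
      · exact ⟨⟨hyΓ.of_home (hy' ▸ S.mem_home y'), by rwa [next, hy']⟩, by rwa [hy']⟩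
      · have hlt : S.level y < k := lt_of_le_of_ne (hk ▸ hyΓ.1) fun heq =>
          hne (hyΓ.home_eq (heq.trans hk.symm))
        exact ih _ hlt hnext rfl
    rw [← sum_filter_add_sum_filter_not _ (fun y => S.home y = Γ), filter_filter, filter_filter,
      hlower, add_zero] at htotal
    rw [← htotal]
    refine sum_congr (filter_congr fun y _ => ?_) fun _ _ => rfl
    rw [memA]
    exact ⟨fun hy => ⟨⟨hy ▸ S.mem_home y, by rwa [next, hy]⟩, hy⟩, fun hy => hy.2⟩

section Validity

variable {A : Finset V}

variable (hFB : F ⊆ B) (hA : ∀ u v, (isolate G F).Adj u v → u ∈ A → v ∈ A)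
include hFB hA

theorem mem_iff_of_mem {y' : V} (hΓ : ¬ S.Affected B Γ) (hy : S.Mem Γ y) (hy' : S.Mem Γ y') :
    y ∈ A ↔ y' ∈ A := by
  have notMem {x : V} (hx : S.Mem Γ x) : x ∉ F := fun hxF => hΓ ⟨x, hFB hxF, hx⟩
  have hmem {u v : V} (hu : S.Mem Γ u) (hv : S.Mem Γ v) : u ∈ A → v ∈ A :=
    hu.of_closed hv (P := (· ∈ A)) fun _ _ hu hv huv => hA _ _ ⟨huv, notMem hu, notMem hv⟩
  exact ⟨hmem hy hy', hmem hy' hy⟩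

theorem mem_iff_of_isNeighbor (hΓ : ¬ S.Affected B Γ) (hy : S.Mem Γ y) (hz : S.IsNeighbor Γ z)
    (hzF : z ∉ F) : y ∈ A ↔ z ∈ A := by
  obtain ⟨_, x, hx, hadj⟩ := hz
  have hxF : x ∉ F := fun hxF => hΓ ⟨x, hFB hxF, hx⟩
  exact (mem_iff_of_mem hFB hA hΓ hy hx).trans
    ⟨hA x z ⟨hadj, hxF, hzF⟩, hA z x ⟨hadj.symm, hzF, hxF⟩⟩

variable (hXF : ∀ x ∈ F, x ∉ X.vertices)
include hXF

theorem mem_iff_of_isActive (hXB : ∀ Γ, S.Affected B Γ → Γ ∉ X.clusters) {e : AuxEdge V p}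
    (he : S.IsActive X e) : e.1 ∈ A ↔ e.2.1 ∈ A := by
  obtain ⟨x, z, o⟩ := e
  obtain ⟨hx, hz, hedge, hvia⟩ := he
  have hxF : x ∉ F := fun h => hXF x h hx
  have hzF : z ∉ F := fun h => hXF z h hz
  cases o with
  | none => exact ⟨hA x z ⟨hedge, hxF, hzF⟩, hA z x ⟨hedge.symm, hzF, hxF⟩⟩
  | some Γ =>
    have hΓ : ¬ S.Affected B Γ := fun h => hXB Γ h (hvia Γ rfl)
    obtain ⟨_, y, hy, _⟩ := hedge.1
    exact (mem_iff_of_isNeighbor hFB hA hΓ hy hedge.1 hxF).symm.trans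
      (mem_iff_of_isNeighbor hFB hA hΓ hy hedge.2 hzF)

theorem mem_iff_of_next (hy : ¬ S.Affected B (S.home y)) (hz : S.next X y = some z) :
    y ∈ A ↔ z ∈ A :=
  mem_iff_of_isNeighbor hFB hA hy (S.mem_home y) (anchor_eq_some hz).2
    fun hzF => hXF z hzF (anchor_eq_some hz).1

/-- Both the whole sum of `sum_bit_add_next_mul_load_eq_zero` and its unaffected part vanish. -/
theorem checksum_bit_eq_zero (hXB : ∀ Γ, S.Affected B Γ → Γ ∉ X.clusters) :
    S.checksum X h B (fun y => bit (y ∈ A)) = 0 := by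
  have htotal := sum_bit_add_next_mul_load_eq_zero h (A := A) fun e he =>
    mem_iff_of_isActive (S := S) hFB hA hXF hXB he
  have hunaffected : ∑ y with ¬ S.Affected B (S.home y),
      (bit (y ∈ A) + (S.next X y).elim 0 fun z => bit (z ∈ A)) * S.load X h y = 0 := by
    rw [sum_congr rfl fun y hy => bit_add_next_mul_load h fun z hz =>
      mem_iff_of_next hFB hA hXF (mem_filter.1 hy).2 hz, ← sum_filter, filter_filter]
    refine sum_eq_zero_of_fiberwise (g := S.home) (fun y hy y' hy' => ?_) fun y hy => ?_
    all_goals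
      simp only [mem_filter, mem_univ, true_and] at hy ⊢
      obtain ⟨haff, hyA, hnext⟩ := hy
    · exact ⟨by rwa [hy'], (mem_iff_of_mem hFB hA haff (S.mem_home y)
        (hy' ▸ S.mem_home y')).1 hyA, by rwa [next, hy']⟩
    · exact sum_load_eq_zero h hnext
  rw [← sum_filter_add_sum_filter_not _ fun y => S.Affected B (S.home y), hunaffected,
    add_zero] at htotal
  exact htotal

end Validity
end ClusterHierarchy
end Checksum

theorem exists_component_root {V : Type*} (H : SimpleGraph V) :
    ∃ root : V → V, (∀ v, H.Reachable (root v) v) ∧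
      ∀ u v, H.Reachable u v → root u = root v :=
  ⟨fun v => (H.connectedComponentMk v).out,
    fun _ => SimpleGraph.ConnectedComponent.exact (Quot.out_eq _),
    fun _ _ h => congrArg Quot.out (SimpleGraph.ConnectedComponent.sound h)⟩

section Existence

variable {V : Type*} {p : ℕ}

theorem notMem_of_reachable_isolate {G : SimpleGraph V} {X : Finset V} {u v : V}
    (h : (isolate G X).Reachable u v) (hu : u ∉ X) : v ∉ X := by
  obtain ⟨walk⟩ := h
  induction walk with
  | nil => exact hu
  | cons e _ ih => exact ih e.2.2

variable [Fintype V]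

theorem IsHierarchy.exists_level {D : ℕ → Finset V} (hD : IsHierarchy p D) :
    ∃ level : V → Fin p, ∀ v j, v ∈ D j ↔ j ≤ level v := by
  have hv (v : V) : ∃ k : Fin p, ∀ j, v ∈ D j ↔ j ≤ k := by
    have h0 : v ∈ D 0 := hD.zero ▸ mem_univ v
    have hfind : v ∈ D (Nat.findGreatest (v ∈ D ·) p) :=
      Nat.findGreatest_spec (P := (v ∈ D ·)) (Nat.zero_le p) h0
    have hlt {j : ℕ} (hj : v ∈ D j) : j < p := by
      by_contra! hpj
      simpa [hD.last] using hD.anti hpj hj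
    exact ⟨⟨_, hlt hfind⟩, fun j =>
      ⟨fun hj => Nat.le_findGreatest (hlt hj).le hj, fun hj => hD.anti hj hfind⟩⟩
  choose level hlevel using hv
  exact ⟨level, hlevel⟩

theorem exists_clusterHierarchy (G : SimpleGraph V) (hp : Fintype.card V < 2 ^ p) :
    Nonempty (ClusterHierarchy G p (2 * p + 54)) := by
  obtain ⟨D, hD, hrobust⟩ := exists_isRobust_hierarchy G hp
  obtain ⟨level, hlevel⟩ := hD.exists_level
  have level_le (v : V) (j : Fin p) : level v ≤ j ↔ v ∉ D (j + 1) := by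
    rw [hlevel, not_le, Nat.lt_succ_iff, Fin.le_def]
  choose tour htour hreach hcover hcount using
    fun j : Fin p => (hrobust j).exists_walk_lists hp
  let H (j : Fin p) : SimpleGraph V := isolate G (D (j + 1))
  choose root reachable_root root_eq using fun j => exists_component_root (H j)
  have level_le_of_reachable {j : Fin p} {u v : V} (h : (H j).Reachable u v) (hu : level u ≤ j) :
      level v ≤ j :=
    (level_le v j).2 <| notMem_of_reachable_isolate h ((level_le u j).1 hu)
  refine ⟨{
    level, root
    tour := fun Γ => if level Γ.2 ≤ Γ.1 ∧ root Γ.1 Γ.2 = Γ.2 then tour Γ.1 Γ.2 else []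
    root_eq_of_adj := fun j x y hxy hx hy =>
      root_eq _ _ _ (SimpleGraph.Adj.reachable ⟨hxy, (level_le x j).1 hx, (level_le y j).1 hy⟩)
    reachable_of_root_eq := fun j x y hxy => ?_
    isChain_tour := fun Γ => ?_
    mem_of_mem_tour := fun Γ x hx => ?_
    mem_tour_root := fun y => ?_
    count_tour_le := fun Γ x => ?_ }⟩
  · have hD : (univ.filter fun v => j < level v) = D (j + 1) := by
      ext v
      simp [hlevel]
    rw [hD]
    exact (reachable_root j x).symm.trans (hxy ▸ reachable_root j y)
  · split_ifs
    · exact (htour _ _).imp fun _ _ h => h.1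
    · exact List.IsChain.nil
  · split_ifs at hx with h
    · have hr := hreach _ _ x hx
      exact ⟨level_le_of_reachable hr h.1, by rw [← root_eq _ _ _ hr, h.2]⟩
    · simp at hx
  · have hr := reachable_root (level y) y
    rw [if_pos ⟨level_le_of_reachable hr.symm le_rfl, root_eq _ _ _ hr⟩]
    exact hcover _ _ y (mem_sdiff.2 ⟨(hlevel y _).2 le_rfl, (level_le y _).1 le_rfl⟩) hr
  · split_ifs
    · exact hcount _ _ x
    · simp
end Existence

section Potential

/-- Summation by parts: the increments of `T` are summed against `a`, which is constant away from
the zeros of `T`. -/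
theorem sum_range_mul_add_eq_zero {R : Type*} [CommRing R] [CharP R 2] {n : ℕ} {a T : ℕ → R}
    (h0 : T 0 = 0) (hn : T n = 0)
    (h : ∀ i, i + 1 < n → a i * T (i + 1) = a (i + 1) * T (i + 1)) :
    ∑ i ∈ range n, a i * (T (i + 1) + T i) = 0 := by
  have hpartial : ∀ k, k + 1 ≤ n → ∑ i ∈ range (k + 1), a i * (T (i + 1) + T i) =
      a k * T (k + 1) := by
    intro k
    induction k with
    | zero => simp [h0]
    | succ k ih =>
      intro hk
      rw [sum_range_succ, ih (by omega), h k (by omega), mul_add, add_left_comm,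
        CharTwo.add_self_eq_zero, add_zero]
  cases n with
  | zero => simp
  | succ n => rw [hpartial n le_rfl, hn, mul_zero]

/-- A `ZMod 2`-valued function of the positions on the tours of all clusters. -/
abbrev Potential (V : Type*) (p : ℕ) := Cluster V p → ℕ → ZMod 2

variable {V : Type*} [Fintype V] {p Δ : ℕ}

namespace ClusterHierarchy

section Positions

variable {G : SimpleGraph V} (S : ClusterHierarchy G p Δ) (X : Sample V p)
  (h : AuxEdge V p → ZMod 2) (Γ : Cluster V p) (α : Potential V p)

/-- The first position of `y` on the tour of its home. -/
noncomputable def pos (y : V) : ℕ := (S.tour (S.home y)).idxOf y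

/-- The value of a potential at a vertex. -/
noncomputable def value (y : V) : ZMod 2 := α (S.home y) (S.pos y)

/-- The total load of the vertices at home in `Γ` whose position is less than `i`. -/
noncomputable def prefixLoad (i : ℕ) : ZMod 2 :=
  ∑ y with S.home y = Γ ∧ S.pos y < i, S.load X h y

/-- The home and position of the anchor of `Γ`. -/
noncomputable def anchorPos : Option (Cluster V p × ℕ) :=
  (S.anchor X Γ).map fun z => (S.home z, S.pos z)

theorem pos_lt (y : V) : S.pos y < (S.tour (S.home y)).length :=
  List.idxOf_lt_length_iff.2 (S.mem_tour_root y)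

theorem getElem?_pos (y : V) : (S.tour (S.home y))[S.pos y]? = some y := by
  rw [List.getElem?_eq_getElem (S.pos_lt y)]
  simp [pos]

theorem prefixLoad_zero : S.prefixLoad X h Γ 0 = 0 := by
  simp [prefixLoad]

theorem prefixLoad_length :
    S.prefixLoad X h Γ (S.tour Γ).length = ∑ y with S.home y = Γ, S.load X h y := by
  refine sum_congr (filter_congr fun y _ => and_iff_left_of_imp ?_) fun _ _ => rfl
  rintro rfl
  exact S.pos_lt y

theorem prefixLoad_succ_add (i : ℕ) : S.prefixLoad X h Γ (i + 1) + S.prefixLoad X h Γ i =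
    ∑ y with S.home y = Γ ∧ S.pos y = i, S.load X h y := by
  have hsplit : S.prefixLoad X h Γ (i + 1) = S.prefixLoad X h Γ i +
      ∑ y with S.home y = Γ ∧ S.pos y = i, S.load X h y := by
    rw [prefixLoad, prefixLoad, ← sum_union <| disjoint_filter.2 fun y _ h₁ h₂ => by omega]
    refine sum_congr (ext fun y => ?_) fun _ _ => rfl
    simp only [mem_filter, mem_univ, true_and, mem_union, Nat.lt_succ_iff_lt_or_eq, and_or_left]
  rw [hsplit, add_right_comm, CharTwo.add_self_eq_zero, zero_add]

theorem sum_value_mul_load :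
    ∑ y with S.home y = Γ, S.value α y * S.load X h y =
      ∑ i ∈ range (S.tour Γ).length,
        α Γ i * (S.prefixLoad X h Γ (i + 1) + S.prefixLoad X h Γ i) := by
  have hpos : ∀ y ∈ univ.filter (S.home · = Γ), S.pos y ∈ range (S.tour Γ).length := by
    intro y hy
    rw [mem_range, ← (mem_filter.1 hy).2]
    exact S.pos_lt y
  rw [← sum_fiberwise_of_maps_to hpos]
  refine sum_congr rfl fun i _ => ?_
  rw [prefixLoad_succ_add, mul_sum, filter_filter]
  refine sum_congr rfl fun y hy => ?_
  obtain ⟨hΓ, hi⟩ := (mem_filter.1 hy).2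
  rw [value, hΓ, hi]

theorem checksum_value (B : Finset V) :
    S.checksum X h B (S.value α) = ∑ Γ with S.Affected B Γ,
      (∑ i ∈ range (S.tour Γ).length,
          α Γ i * (S.prefixLoad X h Γ (i + 1) + S.prefixLoad X h Γ i) +
        ((S.anchorPos X Γ).elim 0 fun q => α q.1 q.2) *
          S.prefixLoad X h Γ (S.tour Γ).length) := by
  have hhome : ∀ y ∈ univ.filter fun y => S.Affected B (S.home y),
      S.home y ∈ univ.filter (S.Affected B) := fun y hy => by simpa using hy
  rw [checksum, ← sum_fiberwise_of_maps_to hhome]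
  refine sum_congr rfl fun Γ hΓ => ?_
  rw [← sum_value_mul_load, prefixLoad_length, mul_sum, ← sum_add_distrib, filter_filter]
  refine sum_congr (filter_congr fun y _ => and_iff_right_of_imp ?_) fun y hy => ?_
  · rintro rfl
    exact (mem_filter.1 hΓ).2
  · rw [← (mem_filter.1 hy).2, add_mul, anchorPos, Option.elim_map]
    rfl

end Positions

/-- The potentials that may arise from `F` and `B` as indicators of unions of components of
`G - F`, as far as this can be told from the labels of `B`. -/
structure IsValid {G : SimpleGraph V} (S : ClusterHierarchy G p Δ) (F B : Finset V)
    (α : Potential V p) : Prop where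
  eq_zero : ∀ Γ i, ¬ S.Affected B Γ → α Γ i = 0
  eq_zero_of_mem : ∀ Γ i, ∀ x ∈ F, (S.tour Γ)[i]? = some x → α Γ i = 0
  eq_succ : ∀ Γ i, i + 1 < (S.tour Γ).length → (∀ w ∈ B, (S.tour Γ)[i]? ≠ some w) →
    (∀ w ∈ B, (S.tour Γ)[i + 1]? ≠ some w) → α Γ i = α Γ (i + 1)

/-- The hierarchies `S₁` and `S₂` of two graphs cannot be told apart from the labels of `B`. -/
structure AgreeOn {G₁ G₂ : SimpleGraph V} (S₁ : ClusterHierarchy G₁ p Δ)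
    (S₂ : ClusterHierarchy G₂ p Δ) (B : Finset V) : Prop where
  home_eq : ∀ w ∈ B, S₁.home w = S₂.home w
  pos_eq : ∀ w ∈ B, S₁.pos w = S₂.pos w
  affected_iff : ∀ Γ, S₁.Affected B Γ ↔ S₂.Affected B Γ
  length_eq : ∀ Γ, S₁.Affected B Γ → (S₁.tour Γ).length = (S₂.tour Γ).length
  getElem?_iff : ∀ Γ, S₁.Affected B Γ → ∀ w ∈ B, ∀ i : ℕ,
    (S₁.tour Γ)[i]? = some w ↔ (S₂.tour Γ)[i]? = some w

/-- The samples `X₁`, `X₂` and the loads arising from them cannot be told apart from the labels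
of `B`. -/
structure LoadsAgreeOn {G₁ G₂ : SimpleGraph V} (S₁ : ClusterHierarchy G₁ p Δ)
    (S₂ : ClusterHierarchy G₂ p Δ) (B : Finset V) (X₁ X₂ : Sample V p)
    (h₁ h₂ : AuxEdge V p → ZMod 2) : Prop where
  vertices_iff : ∀ w ∈ B, w ∈ X₁.vertices ↔ w ∈ X₂.vertices
  clusters_iff : ∀ Γ, S₁.Affected B Γ → (Γ ∈ X₁.clusters ↔ Γ ∈ X₂.clusters)
  anchorPos_eq : ∀ Γ, S₁.Affected B Γ → S₁.anchorPos X₁ Γ = S₂.anchorPos X₂ Γ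
  prefixLoad_length_eq : ∀ Γ, S₁.Affected B Γ →
    S₁.prefixLoad X₁ h₁ Γ (S₁.tour Γ).length = S₂.prefixLoad X₂ h₂ Γ (S₂.tour Γ).length
  prefixLoad_eq : ∀ Γ, S₁.Affected B Γ → ∀ w ∈ B, ∀ i, (S₁.tour Γ)[i]? = some w →
    S₁.prefixLoad X₁ h₁ Γ i = S₂.prefixLoad X₂ h₂ Γ i
  prefixLoad_succ_eq : ∀ Γ, S₁.Affected B Γ → ∀ w ∈ B, ∀ i, (S₁.tour Γ)[i]? = some w →
    S₁.prefixLoad X₁ h₁ Γ (i + 1) = S₂.prefixLoad X₂ h₂ Γ (i + 1)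

variable {G₁ G₂ : SimpleGraph V} {S₁ : ClusterHierarchy G₁ p Δ} {S₂ : ClusterHierarchy G₂ p Δ}
  {F B : Finset V} {α : Potential V p}

theorem IsValid.transfer (hα : S₁.IsValid F B α) (hS : AgreeOn S₁ S₂ B) (hFB : F ⊆ B) :
    S₂.IsValid F B α := by
  refine ⟨fun Γ i hΓ => hα.eq_zero Γ i (by rwa [hS.affected_iff]), fun Γ i x hx hi => ?_,
    fun Γ i hi hB hB' => ?_⟩ <;> by_cases hΓ : S₁.Affected B Γ
  · exact hα.eq_zero_of_mem Γ i x hx ((hS.getElem?_iff Γ hΓ x (hFB hx) i).2 hi)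
  · exact hα.eq_zero Γ i hΓ
  · exact hα.eq_succ Γ i (by rwa [hS.length_eq Γ hΓ])
      (fun w hw => (hS.getElem?_iff Γ hΓ w hw i).not.2 (hB w hw))
      (fun w hw => (hS.getElem?_iff Γ hΓ w hw (i + 1)).not.2 (hB' w hw))
  · rw [hα.eq_zero Γ _ hΓ, hα.eq_zero Γ _ hΓ]

variable {X₁ X₂ : Sample V p} {h₁ h₂ : AuxEdge V p → ZMod 2}

/-- By summation by parts along the tour, only prefix loads next to vertices of `B` matter. -/
theorem sum_mul_prefixLoad_eq (hα : S₁.IsValid F B α) (hS : AgreeOn S₁ S₂ B)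
    (hX : LoadsAgreeOn S₁ S₂ B X₁ X₂ h₁ h₂) {Γ : Cluster V p} (hΓ : S₁.Affected B Γ) :
    ∑ i ∈ range (S₁.tour Γ).length,
        α Γ i * (S₁.prefixLoad X₁ h₁ Γ (i + 1) + S₁.prefixLoad X₁ h₁ Γ i) =
      ∑ i ∈ range (S₂.tour Γ).length,
        α Γ i * (S₂.prefixLoad X₂ h₂ Γ (i + 1) + S₂.prefixLoad X₂ h₂ Γ i) := by
  let T (i : ℕ) : ZMod 2 := S₁.prefixLoad X₁ h₁ Γ i + S₂.prefixLoad X₂ h₂ Γ i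
  have hT {i : ℕ} (heq : S₁.prefixLoad X₁ h₁ Γ i = S₂.prefixLoad X₂ h₂ Γ i) : T i = 0 :=
    CharTwo.add_eq_zero.2 heq
  have hsum : ∑ i ∈ range (S₁.tour Γ).length, α Γ i * (T (i + 1) + T i) = 0 := by
    refine sum_range_mul_add_eq_zero (hT (by simp only [prefixLoad_zero]))
      (hT ((hX.prefixLoad_length_eq Γ hΓ).trans (by rw [hS.length_eq Γ hΓ]))) fun i hi => ?_
    by_cases hw : ∃ w ∈ B, (S₁.tour Γ)[i]? = some w
    · obtain ⟨w, hw, hwi⟩ := hw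
      rw [hT (hX.prefixLoad_succ_eq Γ hΓ w hw i hwi), mul_zero, mul_zero]
    by_cases hw' : ∃ w ∈ B, (S₁.tour Γ)[i + 1]? = some w
    · obtain ⟨w, hw, hwi⟩ := hw'
      rw [hT (hX.prefixLoad_eq Γ hΓ w hw (i + 1) hwi), mul_zero, mul_zero]
    push Not at hw hw'
    rw [hα.eq_succ Γ i hi hw hw']
  rw [← hS.length_eq Γ hΓ, ← CharTwo.add_eq_zero, ← hsum, ← sum_add_distrib]
  exact sum_congr rfl fun i _ => by ring

theorem checksum_value_eq (hα : S₁.IsValid F B α) (hS : AgreeOn S₁ S₂ B)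
    (hX : LoadsAgreeOn S₁ S₂ B X₁ X₂ h₁ h₂) :
    S₁.checksum X₁ h₁ B (S₁.value α) = S₂.checksum X₂ h₂ B (S₂.value α) := by
  rw [checksum_value, checksum_value]
  refine sum_congr (filter_congr fun Γ _ => hS.affected_iff Γ) fun Γ hΓ => ?_
  have hΓ := (hS.affected_iff Γ).2 (mem_filter.1 hΓ).2
  rw [sum_mul_prefixLoad_eq hα hS hX hΓ, hX.anchorPos_eq Γ hΓ, hX.prefixLoad_length_eq Γ hΓ]

end ClusterHierarchy
end Potential

section Counting

theorem two_pow_mul_one_sub_inv_pow_lt_one {Q k : ℕ} (hQ : 0 < Q) (hk : 0 < k) :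
    (2 : ℝ) ^ k * (1 - 1 / Q) ^ (Q * k) < 1 := by
  have hQ' : (1 : ℝ) ≤ Q := by exact_mod_cast hQ
  have hnonneg : (0 : ℝ) ≤ 1 - 1 / Q := sub_nonneg.2 ((div_le_one (by positivity)).2 hQ')
  rw [pow_mul, ← mul_pow]
  refine pow_lt_one₀ (by positivity) ?_ hk.ne'
  calc (2 : ℝ) * (1 - 1 / Q) ^ Q ≤ 2 * Real.exp (-1) := by
        gcongr
        exact Real.one_sub_div_pow_le_exp_neg hQ'
    _ < 1 := by linarith [Real.exp_neg_one_lt_d9]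

theorem card_compl_le {Ω : Type*} [Fintype Ω] {Q : ℕ} {s : Finset Ω} (hQ : 0 < Q)
    (hs : Fintype.card Ω ≤ Q * #s) : (#sᶜ : ℝ) ≤ (1 - 1 / Q) * Fintype.card Ω := by
  have hle : (Fintype.card Ω : ℝ) / Q ≤ #s :=
    (div_le_iff₀' (by positivity)).2 (by exact_mod_cast hs)
  rw [card_compl, Nat.cast_sub (card_le_univ _)]
  linarith [one_div_mul_eq_div (Q : ℝ) (Fintype.card Ω)]

/-- A union bound over `K` shows that a random tuple has an entry in every `s κ`. -/
theorem exists_tuple_forall_exists_mem {K Ω : Type*} [Fintype K] [Fintype Ω] [Nonempty Ω]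
    {Q k : ℕ} (hk : 0 < k) (hK : Fintype.card K ≤ 2 ^ k) (s : K → Finset Ω)
    (hs : ∀ κ, Fintype.card Ω ≤ Q * #(s κ)) :
    ∃ ω : Fin (Q * k) → Ω, ∀ κ, ∃ r, ω r ∈ s κ := by
  rcases isEmpty_or_nonempty K with hemp | ⟨⟨κ₀⟩⟩
  · exact ⟨fun _ => Classical.arbitrary Ω, fun κ => hemp.elim κ⟩
  have hQ : 0 < Q := Nat.pos_of_mul_pos_right (Fintype.card_pos.trans_le (hs κ₀))
  by_contra! hmiss
  have hbad (κ : K) := card_compl_le hQ (hs κ)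
  have hcover : (univ : Finset (Fin (Q * k) → Ω)) ⊆
      univ.biUnion fun κ => Fintype.piFinset fun _ => (s κ)ᶜ := fun ω _ => by
    obtain ⟨κ, hκ⟩ := hmiss ω
    simpa using ⟨κ, hκ⟩
  have hunion : (Fintype.card Ω : ℝ) ^ (Q * k) ≤ ∑ κ, (#(s κ)ᶜ : ℝ) ^ (Q * k) := by
    have := (card_le_card hcover).trans card_biUnion_le
    simp only [card_univ, Fintype.card_fun, Fintype.card_fin, Fintype.card_piFinset_const] at this
    exact_mod_cast this
  have hsum : ∑ κ, (#(s κ)ᶜ : ℝ) ^ (Q * k) ≤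
      2 ^ k * (1 - 1 / Q) ^ (Q * k) * Fintype.card Ω ^ (Q * k) := by
    calc ∑ κ, (#(s κ)ᶜ : ℝ) ^ (Q * k)
        ≤ ∑ _κ : K, ((1 - 1 / Q) * Fintype.card Ω : ℝ) ^ (Q * k) := by gcongr; exact hbad _
      _ = Fintype.card K * ((1 - 1 / Q) * Fintype.card Ω : ℝ) ^ (Q * k) := by
        rw [sum_const, card_univ, nsmul_eq_mul]
      _ ≤ 2 ^ k * ((1 - 1 / Q) * Fintype.card Ω : ℝ) ^ (Q * k) :=
        mul_le_mul_of_nonneg_right (by exact_mod_cast hK)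
          (pow_nonneg ((Nat.cast_nonneg _).trans (hbad κ₀)) _)
      _ = _ := by rw [mul_pow, mul_assoc]
  exact lt_irrefl _ <| (hunion.trans hsum).trans_lt <|
    mul_lt_of_lt_one_left (pow_pos (Nat.cast_pos.2 Fintype.card_pos) _)
      (two_pow_mul_one_sub_inv_pow_lt_one hQ hk)

theorem pow_le_two_mul_sub_one_pow {N b : ℕ} (hb : 2 * b ≤ N) : N ^ b ≤ 2 * (N - 1) ^ b := by
  rcases Nat.eq_zero_or_pos N with rfl | hN
  · simp [show b = 0 by omega]
  have hN' : (0 : ℝ) < N := by positivity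
  have hbN : (b : ℝ) / N ≤ 1 / 2 := by
    rw [div_le_div_iff₀ hN' two_pos]
    exact_mod_cast by omega
  have hbernoulli : (1 / 2 : ℝ) ≤ (1 - 1 / N) ^ b := by
    have hle : (1 : ℝ) / N ≤ 1 := (div_le_one hN').2 (by exact_mod_cast hN)
    have := one_add_mul_le_pow (a := -(1 / N : ℝ)) (by linarith) b
    rw [← sub_eq_add_neg, mul_neg, mul_one_div] at this
    linarith
  have hreal : (N : ℝ) ^ b ≤ 2 * ((N - 1 : ℕ) : ℝ) ^ b := by
    calc (N : ℝ) ^ b = 2 * (1 / 2) * N ^ b := by ring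
      _ ≤ 2 * (1 - 1 / N) ^ b * N ^ b := by gcongr
      _ = 2 * ((N - 1 : ℕ) : ℝ) ^ b := by
        rw [mul_assoc, ← mul_pow, sub_mul, one_mul, one_div_mul_cancel hN'.ne', Nat.cast_sub hN,
          Nat.cast_one]
  exact_mod_cast hreal

theorem card_colourings_le {I : Type*} [Fintype I] [DecidableEq I] {N : ℕ} [NeZero N]
    {A B : Finset I} (hAB : Disjoint A B) (hB : 2 * #B ≤ N) :
    Fintype.card (I → Fin N) ≤
      2 * N ^ #A * #{c : I → Fin N | (∀ i ∈ A, c i = 0) ∧ ∀ i ∈ B, c i ≠ 0} := by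
  let palette (i : I) : Finset (Fin N) :=
    if i ∈ A then {0} else if i ∈ B then univ.erase 0 else univ
  have hpalette : univ.filter (fun c : I → Fin N => (∀ i ∈ A, c i = 0) ∧ ∀ i ∈ B, c i ≠ 0) =
      Fintype.piFinset palette := by
    ext c
    simp only [mem_filter, mem_univ, true_and, Fintype.mem_piFinset, palette, ← forall_and]
    refine forall_congr' fun i => ?_
    have hdisjoint : i ∈ A → i ∉ B := fun h => disjoint_left.1 hAB h
    split_ifs <;> simp_all
  have hA : ∏ i ∈ A, #(palette i) = 1 := prod_eq_one fun i hi => by simp [palette, hi]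
  have hB' : ∏ i ∈ B, #(palette i) = (N - 1) ^ #B := prod_eq_pow_card fun i hi => by
    simp [palette, hi, disjoint_right.1 hAB hi]
  have hrest : ∏ i ∈ (A ∪ B)ᶜ, #(palette i) = N ^ #(A ∪ B)ᶜ := prod_eq_pow_card fun i hi => by
    rw [mem_compl, mem_union, not_or] at hi
    simp [palette, hi.1, hi.2]
  have hcard : Fintype.card I = #A + #B + #(A ∪ B)ᶜ := by
    rw [← card_union_of_disjoint hAB, card_add_card_compl]
  rw [hpalette, Fintype.card_piFinset, ← prod_mul_prod_compl (A ∪ B), prod_union hAB, hA, hB',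
    hrest, Fintype.card_fun, Fintype.card_fin, hcard, one_mul]
  calc N ^ (#A + #B + #(A ∪ B)ᶜ) = N ^ #A * N ^ #B * N ^ #(A ∪ B)ᶜ := by rw [pow_add, pow_add]
    _ ≤ N ^ #A * (2 * (N - 1) ^ #B) * N ^ #(A ∪ B)ᶜ := by
      gcongr
      exact pow_le_two_mul_sub_one_pow hB
    _ = _ := by ring

theorem card_prod_le {Ω₁ Ω₂ : Type*} [Fintype Ω₁] [Fintype Ω₂] {P : Ω₁ → Prop}
    [DecidablePred P] {R : Ω₁ → Ω₂ → Prop} [∀ c, DecidablePred (R c)] {q₁ q₂ : ℕ}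
    (h₁ : Fintype.card Ω₁ ≤ q₁ * #{c | P c})
    (h₂ : ∀ c, P c → Fintype.card Ω₂ ≤ q₂ * #{d | R c d}) :
    Fintype.card (Ω₁ × Ω₂) ≤ q₁ * q₂ * #{o : Ω₁ × Ω₂ | P o.1 ∧ R o.1 o.2} := by
  have hfiber : #{o : Ω₁ × Ω₂ | P o.1 ∧ R o.1 o.2} = ∑ c with P c, #{d | R c d} := by
    rw [← card_sigma, ← card_map (Equiv.sigmaEquivProd Ω₁ Ω₂).toEmbedding]
    congr 1
    ext ⟨c, d⟩
    simp
  calc Fintype.card (Ω₁ × Ω₂) = Fintype.card Ω₁ * Fintype.card Ω₂ := Fintype.card_prod _ _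
    _ ≤ q₁ * #{c | P c} * Fintype.card Ω₂ := by gcongr
    _ = q₁ * ∑ c with P c, Fintype.card Ω₂ := by rw [sum_const, smul_eq_mul, mul_assoc]
    _ ≤ q₁ * ∑ c with P c, q₂ * #{d | R c d} := by
      gcongr with c hc
      exact h₂ c (mem_filter.1 hc).2
    _ = _ := by rw [← mul_sum, hfiber, mul_assoc]

theorem card_le_two_mul_card_filter {Ω : Type*} [Fintype Ω] {P : Ω → Prop} [DecidablePred P]
    {τ : Ω → Ω} (hτ : Function.Injective τ) (hP : ∀ ω, ¬ P ω → P (τ ω)) :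
    Fintype.card Ω ≤ 2 * #{ω | P ω} := by
  have hle : #{ω | ¬ P ω} ≤ #{ω | P ω} :=
    card_le_card_of_injOn τ (fun ω hω => by simpa using hP ω (by simpa using hω)) hτ.injOn
  rw [← card_univ, ← card_filter_add_card_filter_not P, two_mul]
  gcongr

end Counting

section Bits

/-- The elements of `α` can be encoded by strings of `b` bits. -/
def FitsInBits (α : Type*) (b : ℕ) : Prop := Nonempty (α ↪ (Fin b → Bool))

namespace FitsInBits

variable {α β : Type*} {a b : ℕ}

theorem iff_card_le [Fintype α] : FitsInBits α b ↔ Fintype.card α ≤ 2 ^ b := by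
  rw [FitsInBits, Function.Embedding.nonempty_iff_card_le, Fintype.card_fun, Fintype.card_bool,
    Fintype.card_fin]

theorem of_injective (hβ : FitsInBits β b) {g : α → β} (hg : Function.Injective g) :
    FitsInBits α b :=
  hβ.map (Function.Embedding.trans ⟨g, hg⟩)

theorem mono (hα : FitsInBits α a) (h : a ≤ b) : FitsInBits α b :=
  hα.map fun e => e.trans (iff_card_le.2 (by simpa using Nat.pow_le_pow_right two_pos h)).some

theorem prod (hα : FitsInBits α a) (hβ : FitsInBits β b) : FitsInBits (α × β) (a + b) :=
  hα.map2 (fun e e' => (e.prodMap e').trans (Fin.appendEquiv a b).toEmbedding) hβ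

theorem pi (k : ℕ) (hα : FitsInBits α a) : FitsInBits (Fin k → α) (k * a) :=
  hα.map fun e => e.arrowCongrRight.trans
    ((Equiv.curry _ _ _).symm.trans (finProdFinEquiv.arrowCongr (.refl _))).toEmbedding

theorem option (hα : FitsInBits α a) : FitsInBits (Option α) (a + 1) := by
  refine of_injective (iff_card_le.2 ?_) hα.some.optionMap.injective
  rw [Fintype.card_option, Fintype.card_fun, Fintype.card_bool, Fintype.card_fin, pow_succ, mul_two]
  exact Nat.add_le_add_left Nat.one_le_two_pow _

theorem bool : FitsInBits Bool 1 := iff_card_le.2 (by simp)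

theorem zmod_two : FitsInBits (ZMod 2) 1 := iff_card_le.2 (by simp [ZMod.card])

theorem fin {n : ℕ} (h : n ≤ 2 ^ b) : FitsInBits (Fin n) b := iff_card_le.2 (by simpa)

end FitsInBits

/-- A list of the elements of `s`, of fixed length `m`. -/
noncomputable def enumerate {α : Type*} (m : ℕ) (s : Finset α) : Fin m → Option α :=
  fun i => s.toList[i.val]?

section Enumerate

variable {α β : Type*} {m : ℕ} {s t : Finset α} {x : α}

theorem mem_of_enumerate_eq_some {i : Fin m} (h : enumerate m s i = some x) : x ∈ s :=
  mem_toList.1 (List.mem_of_getElem? h)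

theorem exists_enumerate_eq_some (hs : #s ≤ m) (hx : x ∈ s) : ∃ i, enumerate m s i = some x := by
  obtain ⟨i, hi, rfl⟩ := List.getElem_of_mem (mem_toList.2 hx)
  exact ⟨⟨i, by simpa using hi.trans_le ((length_toList s).trans_le hs)⟩,
    List.getElem?_eq_getElem hi⟩

theorem exists_mem_eq_of_map_enumerate_eq {g g' : α → β} (hs : #s ≤ m)
    (h : ∀ i, (enumerate m s i).map g = (enumerate m t i).map g') (hx : x ∈ s) :
    ∃ y ∈ t, g' y = g x := by
  obtain ⟨i, hi⟩ := exists_enumerate_eq_some hs hx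
  obtain ⟨y, hy, hyx⟩ := Option.map_eq_some_iff.1 ((h i).symm.trans (by rw [hi, Option.map_some]))
  exact ⟨y, mem_of_enumerate_eq_some hy, hyx⟩

theorem eq_on_of_map_enumerate_eq {g g' : α → β} (hs : #s ≤ m)
    (h : ∀ i, (enumerate m s i).map g = (enumerate m s i).map g') (hx : x ∈ s) : g x = g' x := by
  obtain ⟨i, hi⟩ := exists_enumerate_eq_some hs hx
  simpa [hi] using h i

/-- The positions at which `x` occurs in `l`. -/
noncomputable def positions (l : List α) (x : α) : Finset ℕ := {i ∈ range l.length | l[i]? = some x}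

theorem mem_positions {l : List α} {i : ℕ} : i ∈ positions l x ↔ l[i]? = some x := by
  rw [positions, mem_filter, mem_range, and_iff_right_iff_imp]
  exact fun h => (List.getElem?_eq_some_iff.1 h).1

theorem card_positions (l : List α) (x : α) : #(positions l x) = l.count x := by
  induction l with
  | nil => simp [positions]
  | cons y l ih =>
    rw [List.count_cons, ← ih]
    have hcons : positions (y :: l) x =
        (positions l x).map (addRightEmbedding 1) ∪ if y == x then {0} else ∅ := by
      ext i
      cases i <;> by_cases hyx : y = x <;> simp [mem_positions, hyx]
    rw [hcons, card_union_of_disjoint, card_map]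
    · split_ifs <;> rfl
    · split_ifs <;> simp

end Enumerate
end Bits

section Seeds

/-- A colouring of the vertices and clusters, and random weights of the auxiliary edges. -/
abbrev Seed (V : Type*) (p N : ℕ) := (V ⊕ Cluster V p → Fin N) × (AuxEdge V p → ZMod 2)

/-- The vertices and clusters of colour zero are sampled. -/
def Sample.ofColouring {V : Type*} {p N : ℕ} [NeZero N] (c : V ⊕ Cluster V p → Fin N) :
    Sample V p where
  vertices := {x | c (.inl x) = 0}
  clusters := {Γ | c (.inr Γ) = 0}

/-- The possible values of `ClusterHierarchy.code`. -/
abbrev Code (V : Type*) (p Δ f : ℕ) :=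
  Fin (f + 2) → Option (V × Bool × (Fin p → ZMod 2 × (Fin Δ → Option (ZMod 2 × ZMod 2))))

theorem fitsInBits_code {V : Type*} {p Δ f : ℕ} (hp : FitsInBits V p) :
    FitsInBits (Code V p Δ f) ((f + 2) * (p + (1 + p * (1 + Δ * (1 + 1 + 1))) + 1)) :=
  .pi _ <| .option <| hp.prod <| .prod .bool <| .pi _ <| .prod .zmod_two <| .pi _ <| .option <|
    .prod .zmod_two .zmod_two

namespace ClusterHierarchy

variable {V : Type*} [Fintype V] {G : SimpleGraph V} {p Δ : ℕ} (S : ClusterHierarchy G p Δ)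

/-- The auxiliary edge `e` witnesses that the potential `α` is not the indicator of a union of
components of `G - F`. -/
structure IsCrossing (F B : Finset V) (α : Potential V p) (e : AuxEdge V p) : Prop where
  isAuxEdge : S.IsAuxEdge e
  not_affected : ∀ Γ, e.2.2 = some Γ → ¬ S.Affected B Γ
  snd_notMem : e.2.1 ∉ F
  affected_snd : S.Affected B (S.home e.2.1)
  value_fst : S.value α e.1 = 1
  value_snd : S.value α e.2.1 = 0

/-- The sample `X` contains no faults and no affected clusters. -/
def Avoids (F B : Finset V) (X : Sample V p) : Prop :=
  (∀ x ∈ F, x ∉ X.vertices) ∧ ∀ Γ, S.Affected B Γ → Γ ∉ X.clusters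

/-- The seed `ω` proves that `α` is not the indicator of a union of components of `G - F`, because
its checksum is nonzero. -/
def Detects {N : ℕ} [NeZero N] (F B : Finset V) (α : Potential V p) (ω : Seed V p N) : Prop :=
  S.Avoids F B (.ofColouring ω.1) ∧ S.checksum (.ofColouring ω.1) ω.2 B (S.value α) ≠ 0

/-- One of the seeds `ω` detects any given potential that has a crossing edge, for at most `f`
faults and two query vertices. -/
def DetectsAll {N : ℕ} [NeZero N] {ι : Type*} (f : ℕ) (ω : ι → Seed V p N) : Prop :=
  ∀ F B α e, F ⊆ B → #B ≤ f + 2 → S.IsValid F B α → S.IsCrossing F B α e →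
    ∃ r, S.Detects F B α (ω r)

variable {S} {F B : Finset V} {α β : Potential V p} {e : AuxEdge V p} {X : Sample V p} {y : V}

theorem IsValid.value_eq_zero (hα : S.IsValid F B α) (hy : y ∈ F) : S.value α y = 0 :=
  hα.eq_zero_of_mem _ _ y hy (S.getElem?_pos y)

theorem IsCrossing.fst_notMem (he : S.IsCrossing F B α e) (hα : S.IsValid F B α) : e.1 ∉ F :=
  fun hF => one_ne_zero (he.value_fst.symm.trans (hα.value_eq_zero hF))

theorem IsCrossing.affected_fst (he : S.IsCrossing F B α e) (hα : S.IsValid F B α) :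
    S.Affected B (S.home e.1) := by
  by_contra h
  exact one_ne_zero (he.value_fst.symm.trans (hα.eq_zero _ _ h))

/-- Flipping the weight of a crossing edge flips the checksum. -/
theorem IsCrossing.card_weights_le (he : S.IsCrossing F B α e) (hα : S.IsValid F B α)
    (hX : S.IsActive X e) : Fintype.card (AuxEdge V p → ZMod 2) ≤
      2 * #{h | S.checksum X h B (S.value α) ≠ 0} := by
  let flip : AuxEdge V p → ZMod 2 := Pi.single e 1
  refine card_le_two_mul_card_filter (add_left_injective flip) fun h hh => ?_
  rw [checksum_add, checksum_single S X hX (he.affected_fst hα) he.affected_snd, he.value_fst,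
    he.value_snd, not_not.1 hh]
  simp

theorem IsCrossing.card_colourings_le {N f : ℕ} [NeZero N] (he : S.IsCrossing F B α e)
    (hα : S.IsValid F B α) (hFB : F ⊆ B) (hB : #B ≤ f + 2) (hN : 2 * ((f + 2) * (p + 1)) ≤ N) :
    Fintype.card (V ⊕ Cluster V p → Fin N) ≤ 2 * N ^ 3 *
      #{c : V ⊕ Cluster V p → Fin N | S.IsActive (.ofColouring c) e ∧
        S.Avoids F B (.ofColouring c)} := by
  let present : Finset (V ⊕ Cluster V p) :=
    insert (.inl e.1) (insert (.inl e.2.1) (e.2.2.toFinset.image .inr))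
  let absent : Finset (V ⊕ Cluster V p) := F.disjSum {Γ | S.Affected B Γ}
  have hpresent : #present ≤ 3 := by
    have hle : #(e.2.2.toFinset) ≤ 1 := by cases e.2.2 <;> simp
    exact (card_insert_le _ _).trans <| Nat.succ_le_succ <| (card_insert_le _ _).trans <|
      Nat.succ_le_succ <| card_image_le.trans hle
  have habsent : #absent ≤ (f + 2) * (p + 1) := calc
    #absent ≤ #B + #B * p :=
      (card_disjSum _ _).trans_le (add_le_add (card_le_card hFB) (S.card_affected_le B))
    _ = #B * (p + 1) := by ring
    _ ≤ (f + 2) * (p + 1) := Nat.mul_le_mul_right _ hB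
  have hdisj : Disjoint present absent := by
    simp only [present, absent, disjoint_insert_left, inl_mem_disjSum]
    refine ⟨he.fst_notMem hα, he.snd_notMem, disjoint_left.2 fun i hi hi' => ?_⟩
    obtain ⟨Γ, hΓ, rfl⟩ := mem_image.1 hi
    exact he.not_affected Γ (Option.mem_toFinset.1 hΓ) (mem_filter.1 (inr_mem_disjSum.1 hi')).2
  refine (VertexFault.card_colourings_le hdisj (by omega : 2 * #absent ≤ N)).trans ?_
  refine Nat.mul_le_mul (Nat.mul_le_mul_left 2 (Nat.pow_le_pow_right (NeZero.pos N) hpresent))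
    (card_le_card fun c hc => ?_)
  obtain ⟨hzero, hne⟩ := (mem_filter.1 hc).2
  refine mem_filter.2 ⟨mem_univ _, ⟨hzero _ ?_, hzero _ ?_, he.isAuxEdge, fun Γ hΓ => hzero _ ?_⟩,
    fun x hx => hne _ (inl_mem_disjSum.2 hx), fun Γ hΓ => hne _ (inr_mem_disjSum.2 (by simpa))⟩
  · exact mem_insert_self _ _
  · exact mem_insert_of_mem (mem_insert_self _ _)
  · exact mem_insert_of_mem (mem_insert_of_mem (mem_image_of_mem _ (Option.mem_toFinset.2 hΓ)))

theorem IsCrossing.card_seeds_le {N f : ℕ} [NeZero N] (he : S.IsCrossing F B α e)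
    (hα : S.IsValid F B α) (hFB : F ⊆ B) (hB : #B ≤ f + 2) (hN : 2 * ((f + 2) * (p + 1)) ≤ N) :
    Fintype.card (Seed V p N) ≤ 4 * N ^ 3 * #{ω : Seed V p N | S.Detects F B α ω} := by
  have hprod := card_prod_le (he.card_colourings_le hα hFB hB hN) fun c hc =>
    he.card_weights_le (X := .ofColouring c) hα hc.1
  rw [show 4 * N ^ 3 = 2 * N ^ 3 * 2 by ring]
  refine hprod.trans (Nat.mul_le_mul_left _ (card_le_card fun ω hω => ?_))
  obtain ⟨⟨-, havoids⟩, hne⟩ := (mem_filter.1 hω).2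
  exact mem_filter.2 ⟨mem_univ _, havoids, hne⟩

variable (S F B α) in
/-- The values of `α` at the beginning of the tours of the clusters of `w`, and at and just after
the visits of `w`. -/
noncomputable def readings (w : V) (j : Fin p) : ZMod 2 × (Fin Δ → Option (ZMod 2 × ZMod 2)) :=
  (α (j, S.root j w) 0, fun i => (enumerate Δ (positions (S.tour (j, S.root j w)) w) i).map
    fun q => (α (j, S.root j w) q, α (j, S.root j w) (q + 1)))

theorem eq_of_readings_eq {w : V} (hw : S.readings α w = S.readings β w) {Γ : Cluster V p} {i : ℕ}
    (hi : (S.tour Γ)[i]? = some w) : α Γ i = β Γ i ∧ α Γ (i + 1) = β Γ (i + 1) := by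
  obtain ⟨j, c⟩ := Γ
  obtain rfl : S.root j w = c := (S.mem_of_mem_tour _ w (List.mem_of_getElem? hi)).2
  have hcard := (card_positions (S.tour (j, S.root j w)) w).trans_le (S.count_tour_le _ w)
  exact Prod.mk.inj <| eq_on_of_map_enumerate_eq hcard
    (congrFun (congrArg Prod.snd (congrFun hw j))) (mem_positions.2 hi)

theorem IsValid.eq_of_readings_eq (hα : S.IsValid F B α) (hβ : S.IsValid F B β)
    (hr : ∀ w ∈ B, S.readings α w = S.readings β w) {Γ : Cluster V p} (hΓ : S.Affected B Γ) {i : ℕ}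
    (hi : i < (S.tour Γ).length) : α Γ i = β Γ i := by
  induction i with
  | zero =>
    obtain ⟨w, hw, hm⟩ := hΓ
    simpa only [readings, hm.2] using congrArg Prod.fst (congrFun (hr w hw) Γ.1)
  | succ i ih =>
    by_cases hw : ∃ w ∈ B, (S.tour Γ)[i]? = some w
    · obtain ⟨w, hw, hwi⟩ := hw
      exact (ClusterHierarchy.eq_of_readings_eq (hr w hw) hwi).2
    by_cases hw' : ∃ w ∈ B, (S.tour Γ)[i + 1]? = some w
    · obtain ⟨w, hw, hwi⟩ := hw'
      exact (ClusterHierarchy.eq_of_readings_eq (hr w hw) hwi).1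
    push Not at hw hw'
    rw [← hα.eq_succ Γ i hi hw hw', ← hβ.eq_succ Γ i hi hw hw', ih (by omega)]

theorem IsValid.value_eq (hα : S.IsValid F B α) (hβ : S.IsValid F B β)
    (hr : ∀ w ∈ B, S.readings α w = S.readings β w) : S.value α = S.value β := by
  ext1 y
  by_cases hy : S.Affected B (S.home y)
  · exact hα.eq_of_readings_eq hβ hr hy (S.pos_lt y)
  · rw [value, value, hα.eq_zero _ _ hy, hβ.eq_zero _ _ hy]

variable (S) in
/-- A short description of `F`, `B` and the values of `α` at the vertices. -/
noncomputable def code (f : ℕ) (F B : Finset V) (α : Potential V p) : Code V p Δ f :=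
  fun i => (enumerate (f + 2) B i).map fun w => (w, decide (w ∈ F), S.readings α w)

theorem mem_of_code_eq {f : ℕ} {F' B' : Finset V} (hB : #B ≤ f + 2)
    (h : S.code f F B α = S.code f F' B' β) {w : V} (hw : w ∈ B) :
    w ∈ B' ∧ (w ∈ F ↔ w ∈ F') ∧ S.readings α w = S.readings β w := by
  obtain ⟨w', hw', heq⟩ := exists_mem_eq_of_map_enumerate_eq hB (congrFun h) hw
  obtain ⟨rfl, hF, hr⟩ : w' = w ∧ (w' ∈ F' ↔ w ∈ F) ∧ S.readings β w' = S.readings α w := by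
    simpa using heq
  exact ⟨hw', hF.symm, hr.symm⟩

theorem Detects.of_code_eq {f N : ℕ} [NeZero N] {F' B' : Finset V} {ω : Seed V p N}
    (hω : S.Detects F B α ω) (hFB : F ⊆ B) (hB : #B ≤ f + 2) (hα : S.IsValid F B α)
    (hFB' : F' ⊆ B') (hB' : #B' ≤ f + 2) (hβ : S.IsValid F' B' β)
    (h : S.code f F B α = S.code f F' B' β) : S.Detects F' B' β ω := by
  obtain rfl : B = B' := Subset.antisymm (fun w hw => (mem_of_code_eq hB h hw).1)
    fun w hw => (mem_of_code_eq hB' h.symm hw).1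
  obtain rfl : F = F' := Subset.antisymm
    (fun w hw => (mem_of_code_eq hB h (hFB hw)).2.1.1 hw)
    fun w hw => (mem_of_code_eq hB h (hFB' hw)).2.1.2 hw
  rwa [Detects, ← hα.value_eq hβ fun w hw => (mem_of_code_eq hB h hw).2.2]

variable (S) in
theorem exists_seeds {f N k : ℕ} [NeZero N] (hN : 2 * ((f + 2) * (p + 1)) ≤ N) (hk : 0 < k)
    (hcode : FitsInBits (Code V p Δ f) k) :
    ∃ ω : Fin (4 * N ^ 3 * k) → Seed V p N, S.DetectsAll f ω := by
  let detecting (κ : Code V p Δ f) : Finset (Seed V p N) :=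
    {ω | ∀ F B α e, F ⊆ B → #B ≤ f + 2 → S.IsValid F B α → S.IsCrossing F B α e →
      S.code f F B α = κ → S.Detects F B α ω}
  have hdetecting (κ : Code V p Δ f) :
      Fintype.card (Seed V p N) ≤ 4 * N ^ 3 * #(detecting κ) := by
    by_cases hκ : ∃ F B α e, F ⊆ B ∧ #B ≤ f + 2 ∧ S.IsValid F B α ∧ S.IsCrossing F B α e ∧
      S.code f F B α = κ
    · obtain ⟨F, B, α, e, hFB, hB, hα, he, rfl⟩ := hκ
      refine (he.card_seeds_le hα hFB hB hN).trans <| Nat.mul_le_mul_left _ <|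
        card_le_card fun ω hω => mem_filter.2 ⟨mem_univ _, ?_⟩
      intro F' B' β e' hFB' hB' hβ _ hcode
      exact (mem_filter.1 hω).2.of_code_eq hFB hB hα hFB' hB' hβ hcode.symm
    · have huniv : detecting κ = univ := filter_eq_self.2 fun ω _ F B α e hFB hB hα he hcode =>
        (hκ ⟨F, B, α, e, hFB, hB, hα, he, hcode⟩).elim
      rw [huniv, card_univ]
      exact Nat.le_mul_of_pos_left _ (by have := NeZero.pos N; positivity)
  obtain ⟨ω, hω⟩ :=
    exists_tuple_forall_exists_mem hk (FitsInBits.iff_card_le.1 hcode) detecting hdetecting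
  refine ⟨ω, fun F B α e hFB hB hα he => ?_⟩
  obtain ⟨r, hr⟩ := hω (S.code f F B α)
  exact ⟨r, (mem_filter.1 hr).2 F B α e hFB hB hα he rfl⟩

end ClusterHierarchy
end Seeds

section Transfer

theorem reachable_isolate_iff {V : Type*} {G : SimpleGraph V} {F : Finset V} {s t : V}
    (hs : s ∈ (F : Set V)ᶜ) (ht : t ∈ (F : Set V)ᶜ) :
    (isolate G F).Reachable s t ↔ (G.induce (F : Set V)ᶜ).Reachable ⟨s, hs⟩ ⟨t, ht⟩ := by
  refine ⟨?_, fun h => h.map (G' := isolate G F)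
    ⟨Subtype.val, fun {u v} huv => ⟨huv, u.2, v.2⟩⟩⟩
  rintro ⟨walk⟩
  induction walk with
  | nil => exact .refl _
  | cons hadj _ ih =>
    refine .trans (SimpleGraph.Adj.reachable ?_) (ih hadj.2.2 ht)
    exact hadj.1

namespace ClusterHierarchy

variable {V : Type*} [Fintype V] {p Δ : ℕ}

/-- The potential that is the indicator function of `A` in the affected clusters. -/
noncomputable def indicator {G : SimpleGraph V} (S : ClusterHierarchy G p Δ) (B A : Finset V) :
    Potential V p :=
  fun Γ i => bit (S.Affected B Γ ∧ ∃ x ∈ A, (S.tour Γ)[i]? = some x)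

section Indicator

variable {G : SimpleGraph V} {S : ClusterHierarchy G p Δ} {F B A : Finset V} {y : V}

theorem value_indicator (hy : S.Affected B (S.home y)) :
    S.value (S.indicator B A) y = bit (y ∈ A) := by
  simp only [value, indicator, getElem?_pos, Option.some.injEq, exists_eq_right', hy, true_and]

theorem isValid_indicator (hFB : F ⊆ B) (hAF : Disjoint A F)
    (hA : ∀ u v, (isolate G F).Adj u v → u ∈ A → v ∈ A) :
    S.IsValid F B (S.indicator B A) := by
  refine ⟨fun Γ i hΓ => if_neg fun h => hΓ h.1, fun Γ i x hx hi => if_neg ?_,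
    fun Γ i hi hB hB' => ?_⟩
  · rintro ⟨-, y, hy, hi'⟩
    exact disjoint_left.1 hAF hy (Option.some.inj (hi.symm.trans hi') ▸ hx)
  · rw [List.getElem?_eq_getElem (by omega)] at hB
    rw [List.getElem?_eq_getElem hi] at hB'
    have hadj : (isolate G F).Adj (S.tour Γ)[i] (S.tour Γ)[i + 1] :=
      ⟨List.isChain_iff_getElem.1 (S.isChain_tour Γ) i hi, fun h => hB _ (hFB h) rfl,
        fun h => hB' _ (hFB h) rfl⟩
    have hiff : (S.tour Γ)[i] ∈ A ↔ (S.tour Γ)[i + 1] ∈ A := ⟨hA _ _ hadj, hA _ _ hadj.symm⟩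
    simp only [indicator, List.getElem?_eq_getElem hi,
      List.getElem?_eq_getElem (Nat.lt_of_succ_lt hi), Option.some.injEq, exists_eq_right', hiff]

end Indicator

variable {G₁ G₂ : SimpleGraph V} {S₁ : ClusterHierarchy G₁ p Δ} {S₂ : ClusterHierarchy G₂ p Δ}
  {F B : Finset V} {N f : ℕ} [NeZero N] {ι : Type*} {ω₁ ω₂ : ι → Seed V p N}

/-- If `α` had a crossing edge in `G₂`, some seed would detect it, but the checksum is the same for
`G₁`, where it vanishes. -/
theorem not_isCrossing_indicator {A : Finset V} (hFB : F ⊆ B) (hB : #B ≤ f + 2)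
    (hω : S₂.DetectsAll f ω₂) (hS : AgreeOn S₁ S₂ B)
    (hload : ∀ r, LoadsAgreeOn S₁ S₂ B (.ofColouring (ω₁ r).1) (.ofColouring (ω₂ r).1)
      (ω₁ r).2 (ω₂ r).2) (hAF : Disjoint A F)
    (hA : ∀ u v, (isolate G₁ F).Adj u v → u ∈ A → v ∈ A) (e : AuxEdge V p) :
    ¬ S₂.IsCrossing F B (S₁.indicator B A) e := fun he => by
  have hα := isValid_indicator (S := S₁) hFB hAF hA
  obtain ⟨r, ⟨hXF, hXB⟩, hne⟩ := hω F B _ e hFB hB (hα.transfer hS hFB) he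
  refine hne ?_
  rw [← checksum_value_eq hα hS (hload r), checksum_congr S₁ _ _ fun y => value_indicator]
  exact checksum_bit_eq_zero _ hFB hA
    (fun x hx => ((hload r).vertices_iff x (hFB hx)).not.2 (hXF x hx))
    fun Γ hΓ => ((hload r).clusters_iff Γ hΓ).not.2 (hXB Γ ((hS.affected_iff Γ).1 hΓ))

theorem reachable_of_agreeOn (hFB : F ⊆ B) (hB : #B ≤ f + 2) (hω : S₂.DetectsAll f ω₂)
    (hS : AgreeOn S₁ S₂ B)
    (hload : ∀ r, LoadsAgreeOn S₁ S₂ B (.ofColouring (ω₁ r).1) (.ofColouring (ω₂ r).1)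
      (ω₁ r).2 (ω₂ r).2)
    {s t : V} (hs : s ∈ B) (hsF : s ∉ F) (ht : t ∈ B) (hst : (isolate G₂ F).Reachable s t) :
    (isolate G₁ F).Reachable s t := by
  let A : Finset V := {x | x ∉ F ∧ (isolate G₁ F).Reachable s x}
  have hAF : Disjoint A F := disjoint_left.2 fun x hx => (mem_filter.1 hx).2.1
  have hA : ∀ u v, (isolate G₁ F).Adj u v → u ∈ A → v ∈ A := fun u v huv hu =>
    mem_filter.2 ⟨mem_univ v, huv.2.2, (mem_filter.1 hu).2.2.trans huv.reachable⟩
  have hvalue : ∀ w ∈ B, S₂.value (S₁.indicator B A) w = bit (w ∈ A) := fun w hw => by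
    rw [← value_indicator (S := S₁) (affected_home hw), value, value, hS.home_eq w hw,
      hS.pos_eq w hw]
  have hα := (isValid_indicator (S := S₁) hFB hAF hA).transfer hS hFB
  have hPt : t ∈ {x | S₂.value (S₁.indicator B A) x = 1} := by
    refine mem_of_reachable (S := S₂) (B := B) (F := F) (fun x hx => ?_)
      (fun e he hΓ hx hzF hz => ?_) ?_ (affected_home ht) hst
    · by_contra h
      exact one_ne_zero (hx.symm.trans (hα.eq_zero _ _ h))
    · by_contra hne
      exact not_isCrossing_indicator hFB hB hω hS hload hAF hA e
        ⟨he, hΓ, hzF, hz, hx, (Fin.exists_fin_two.1 ⟨_, rfl⟩).resolve_right hne⟩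
    · rw [Set.mem_ofPred, hvalue s hs, bit, if_pos]
      exact mem_filter.2 ⟨mem_univ s, hsF, .refl s⟩
  by_contra hn
  rw [Set.mem_ofPred, hvalue t ht, bit, if_neg fun h => hn (mem_filter.1 h).2.2] at hPt
  exact zero_ne_one hPt

end ClusterHierarchy
end Transfer

section Labels

/-- What a label records about one visit of a tour to the vertex: its position, and for each seed
the load of the cluster before and after it. -/
structure Visit (q R : ℕ) where
  pos : Fin (2 ^ q)
  before : Fin R → ZMod 2
  after : Fin R → ZMod 2

/-- What a label records about a cluster of the vertex; the fields `total`, `anchor` and `sampled`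
are indexed by seeds. -/
structure ClusterLabel (V : Type*) (p Δ q R : ℕ) where
  length : Fin (2 ^ q)
  total : Fin R → ZMod 2
  anchor : Fin R → Option (Cluster V p × Fin (2 ^ q))
  sampled : Fin R → Bool
  visits : Fin Δ → Option (Visit q R)

/-- The labels of the connectivity labeling scheme with `R` seeds, where positions on tours have
`q` bits. -/
structure Label (V : Type*) (p Δ q R : ℕ) where
  vertex : V
  level : Fin p
  pos : Fin (2 ^ q)
  sampled : Fin R → Bool
  root : Fin p → V
  cluster : Fin p → ClusterLabel V p Δ q R

section Size

variable {V : Type*} {p Δ q R : ℕ}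

theorem fitsInBits_visit : FitsInBits (Visit q R) (q + (R * 1 + R * 1)) :=
  .of_injective (g := fun v => (v.pos, v.before, v.after))
    (.prod (.fin le_rfl) <| .prod (.pi _ .zmod_two) (.pi _ .zmod_two))
    (by rintro ⟨⟩ ⟨⟩ h; simpa using h)

theorem fitsInBits_clusterLabel (hp : FitsInBits V p) : FitsInBits (ClusterLabel V p Δ q R)
    (q + (R * 1 + (R * (p + p + q + 1) + (R * 1 + Δ * (q + (R * 1 + R * 1) + 1))))) :=
  .of_injective (g := fun l => (l.length, l.total, l.anchor, l.sampled, l.visits))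
    (.prod (.fin le_rfl) <| .prod (.pi _ .zmod_two) <|
      .prod (.pi _ <| .option <| .prod (.prod (.fin Nat.lt_two_pow_self.le) hp) (.fin le_rfl)) <|
      .prod (.pi _ .bool) (.pi _ fitsInBits_visit.option))
    (by rintro ⟨⟩ ⟨⟩ h; simpa using h)

theorem fitsInBits_label {c : ℕ} (hp : FitsInBits V p)
    (hc : FitsInBits (ClusterLabel V p Δ q R) c) :
    FitsInBits (Label V p Δ q R) (p + (p + (q + (R * 1 + (p * p + p * c))))) :=
  .of_injective (g := fun l => (l.vertex, l.level, l.pos, l.sampled, l.root, l.cluster))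
    (hp.prod <| .prod (.fin Nat.lt_two_pow_self.le) <| .prod (.fin le_rfl) <|
      .prod (.pi _ .bool) <| .prod (.pi _ hp) (.pi _ hc))
    (by rintro ⟨⟩ ⟨⟩ h; simpa using h)

end Size

theorem ofNat_inj {m i j : ℕ} [NeZero m] (hi : i < m) (hj : j < m) :
    Fin.ofNat m i = Fin.ofNat m j ↔ i = j := by
  rw [Fin.ext_iff, Fin.val_ofNat, Fin.val_ofNat, Nat.mod_eq_of_lt hi, Nat.mod_eq_of_lt hj]

namespace ClusterHierarchy

variable {V : Type*} [Fintype V] {p Δ N q R : ℕ} [NeZero N]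

theorem length_tour_le {G : SimpleGraph V} (S : ClusterHierarchy G p Δ) (Γ : Cluster V p) :
    (S.tour Γ).length ≤ Fintype.card V * Δ := by
  rw [← List.sum_toFinset_count_eq_length]
  exact (sum_le_card_nsmul _ _ Δ fun x _ => S.count_tour_le Γ x).trans
    (Nat.mul_le_mul_right Δ (card_le_univ _))

section Definitions

variable {G : SimpleGraph V} (S : ClusterHierarchy G p Δ) (ω : Fin R → Seed V p N) (q : ℕ)

/-- The part of a label about the visit at position `i` of the tour of `Γ`. -/
noncomputable def visit (Γ : Cluster V p) (i : ℕ) : Visit q R where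
  pos := Fin.ofNat _ i
  before r := S.prefixLoad (.ofColouring (ω r).1) (ω r).2 Γ i
  after r := S.prefixLoad (.ofColouring (ω r).1) (ω r).2 Γ (i + 1)

/-- The part of the label of `w` about the cluster `Γ`. -/
noncomputable def clusterLabel (w : V) (Γ : Cluster V p) : ClusterLabel V p Δ q R where
  length := Fin.ofNat _ (S.tour Γ).length
  total r := S.prefixLoad (.ofColouring (ω r).1) (ω r).2 Γ (S.tour Γ).length
  anchor r := (S.anchorPos (.ofColouring (ω r).1) Γ).map fun z => (z.1, Fin.ofNat _ z.2)
  sampled r := decide (Γ ∈ (Sample.ofColouring (ω r).1).clusters)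
  visits i := (enumerate Δ (positions (S.tour Γ) w) i).map (S.visit ω q Γ)

/-- The label of the vertex `w`. -/
noncomputable def label (w : V) : Label V p Δ q R where
  vertex := w
  level := S.level w
  pos := Fin.ofNat _ (S.pos w)
  sampled r := decide (w ∈ (Sample.ofColouring (ω r).1).vertices)
  root j := S.root j w
  cluster j := S.clusterLabel ω q w (j, S.root j w)

end Definitions

theorem lt_of_getElem?_tour {G : SimpleGraph V} (S : ClusterHierarchy G p Δ)
    (hq : Fintype.card V * Δ < 2 ^ q) {Γ : Cluster V p} {w : V} {i : ℕ}
    (hi : (S.tour Γ)[i]? = some w) : i < 2 ^ q :=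
  ((List.getElem?_eq_some_iff.1 hi).1.trans_le (S.length_tour_le Γ)).trans hq

theorem anchorPos_lt {G : SimpleGraph V} {S : ClusterHierarchy G p Δ}
    (hq : Fintype.card V * Δ < 2 ^ q) {X : Sample V p} {Γ : Cluster V p} {z : Cluster V p × ℕ}
    (hz : S.anchorPos X Γ = some z) : z.2 < 2 ^ q := by
  obtain ⟨y, -, rfl⟩ := Option.map_eq_some_iff.1 hz
  exact lt_of_getElem?_tour S hq (S.getElem?_pos y)

variable {G₁ G₂ : SimpleGraph V} {S₁ : ClusterHierarchy G₁ p Δ} {S₂ : ClusterHierarchy G₂ p Δ}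
  {ω₁ ω₂ : Fin R → Seed V p N} {Γ : Cluster V p} {w : V} {B : Finset V}

theorem Mem.of_label_eq (hw : S₁.Mem Γ w) (h : S₁.label ω₁ q w = S₂.label ω₂ q w) :
    S₂.Mem Γ w := by
  have hlevel : S₁.level w = S₂.level w := congrArg Label.level h
  have hroot : S₁.root Γ.1 w = S₂.root Γ.1 w := congrFun (congrArg Label.root h) Γ.1
  exact ⟨hlevel ▸ hw.1, hroot ▸ hw.2⟩

theorem Mem.clusterLabel_eq (hw : S₁.Mem Γ w) (h : S₁.label ω₁ q w = S₂.label ω₂ q w) :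
    S₁.clusterLabel ω₁ q w Γ = S₂.clusterLabel ω₂ q w Γ := by
  have hcluster : S₁.clusterLabel ω₁ q w (Γ.1, S₁.root Γ.1 w) =
    S₂.clusterLabel ω₂ q w (Γ.1, S₂.root Γ.1 w) := congrFun (congrArg Label.cluster h) Γ.1
  rwa [hw.2, (hw.of_label_eq h).2] at hcluster

theorem Affected.exists_clusterLabel_eq (hΓ : S₁.Affected B Γ)
    (h : ∀ w ∈ B, S₁.label ω₁ q w = S₂.label ω₂ q w) :
    ∃ w, S₁.clusterLabel ω₁ q w Γ = S₂.clusterLabel ω₂ q w Γ :=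
  let ⟨w, hw, hwΓ⟩ := hΓ
  ⟨w, hwΓ.clusterLabel_eq (h w hw)⟩

theorem affected_of_label_eq (h : ∀ w ∈ B, S₁.label ω₁ q w = S₂.label ω₂ q w)
    (hΓ : S₁.Affected B Γ) : S₂.Affected B Γ :=
  let ⟨w, hw, hwΓ⟩ := hΓ
  ⟨w, hw, hwΓ.of_label_eq (h w hw)⟩

theorem visit_eq_of_label_eq (hq : Fintype.card V * Δ < 2 ^ q)
    (h : S₁.label ω₁ q w = S₂.label ω₂ q w) {i : ℕ} (hi : (S₁.tour Γ)[i]? = some w) :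
    (S₂.tour Γ)[i]? = some w ∧ S₁.visit ω₁ q Γ i = S₂.visit ω₂ q Γ i := by
  have hw : S₁.Mem Γ w := S₁.mem_of_mem_tour Γ w (List.mem_of_getElem? hi)
  obtain ⟨i', hi', hvisit⟩ := exists_mem_eq_of_map_enumerate_eq
    ((card_positions _ w).trans_le (S₁.count_tour_le Γ w))
    (congrFun (congrArg ClusterLabel.visits (hw.clusterLabel_eq h))) (mem_positions.2 hi)
  rw [mem_positions] at hi'
  obtain rfl : i' = i := (ofNat_inj (lt_of_getElem?_tour S₂ hq hi')
    (lt_of_getElem?_tour S₁ hq hi)).1 (congrArg Visit.pos hvisit)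
  exact ⟨hi', hvisit.symm⟩

theorem agreeOn_of_label_eq (hq : Fintype.card V * Δ < 2 ^ q)
    (h : ∀ w ∈ B, S₁.label ω₁ q w = S₂.label ω₂ q w) : AgreeOn S₁ S₂ B where
  home_eq w hw := by
    have hlevel : S₁.level w = S₂.level w := congrArg Label.level (h w hw)
    have hroot : S₁.root (S₂.level w) w = S₂.root (S₂.level w) w :=
      congrFun (congrArg Label.root (h w hw)) _
    rw [home, home, hlevel, hroot]
  pos_eq w hw := (ofNat_inj (lt_of_getElem?_tour S₁ hq (S₁.getElem?_pos w))
    (lt_of_getElem?_tour S₂ hq (S₂.getElem?_pos w))).1 (congrArg Label.pos (h w hw))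
  affected_iff _ := ⟨affected_of_label_eq h, affected_of_label_eq fun w hw => (h w hw).symm⟩
  length_eq Γ hΓ :=
    let ⟨_, hw⟩ := hΓ.exists_clusterLabel_eq h
    (ofNat_inj ((S₁.length_tour_le Γ).trans_lt hq) ((S₂.length_tour_le Γ).trans_lt hq)).1
      (congrArg ClusterLabel.length hw)
  getElem?_iff _ _ w hw _ := ⟨fun hi => (visit_eq_of_label_eq hq (h w hw) hi).1,
    fun hi => (visit_eq_of_label_eq hq (h w hw).symm hi).1⟩

theorem anchorPos_eq_of_clusterLabel_eq (hq : Fintype.card V * Δ < 2 ^ q)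
    (h : S₁.clusterLabel ω₁ q w Γ = S₂.clusterLabel ω₂ q w Γ) (r : Fin R) :
    S₁.anchorPos (.ofColouring (ω₁ r).1) Γ = S₂.anchorPos (.ofColouring (ω₂ r).1) Γ := by
  have hr : (S₁.anchorPos (.ofColouring (ω₁ r).1) Γ).map
        (fun z => (z.1, Fin.ofNat (2 ^ q) z.2)) =
      (S₂.anchorPos (.ofColouring (ω₂ r).1) Γ).map (fun z => (z.1, Fin.ofNat (2 ^ q) z.2)) :=
    congrFun (congrArg ClusterLabel.anchor h) r
  cases h₁ : S₁.anchorPos (.ofColouring (ω₁ r).1) Γ <;>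
    cases h₂ : S₂.anchorPos (.ofColouring (ω₂ r).1) Γ <;>
    simp only [h₁, h₂, Option.map_none, Option.map_some, reduceCtorEq, Option.some.injEq,
      Prod.mk.injEq] at hr ⊢
  exact Prod.ext hr.1 ((ofNat_inj (anchorPos_lt hq h₁) (anchorPos_lt hq h₂)).1 hr.2)

theorem loadsAgreeOn_of_label_eq (hq : Fintype.card V * Δ < 2 ^ q)
    (h : ∀ w ∈ B, S₁.label ω₁ q w = S₂.label ω₂ q w) (r : Fin R) :
    LoadsAgreeOn S₁ S₂ B (.ofColouring (ω₁ r).1) (.ofColouring (ω₂ r).1) (ω₁ r).2 (ω₂ r).2 where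
  vertices_iff w hw :=
    decide_eq_decide.1 (congrFun (congrArg Label.sampled (h w hw)) r)
  clusters_iff _ hΓ :=
    let ⟨_, hw⟩ := hΓ.exists_clusterLabel_eq h
    decide_eq_decide.1 (congrFun (congrArg ClusterLabel.sampled hw) r)
  anchorPos_eq _ hΓ :=
    let ⟨_, hw⟩ := hΓ.exists_clusterLabel_eq h
    anchorPos_eq_of_clusterLabel_eq hq hw r
  prefixLoad_length_eq _ hΓ :=
    let ⟨_, hw⟩ := hΓ.exists_clusterLabel_eq h
    congrFun (congrArg ClusterLabel.total hw) r
  prefixLoad_eq _ _ w hw _ hi :=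
    congrFun (congrArg Visit.before (visit_eq_of_label_eq hq (h w hw) hi).2) r
  prefixLoad_succ_eq _ _ w hw _ hi :=
    congrFun (congrArg Visit.after (visit_eq_of_label_eq hq (h w hw) hi).2) r

end ClusterHierarchy
end Labels

section Decoder

/-- The decoder looks for any instance and query with the given labels on which `P` holds. -/
theorem exists_decoder {ι V L : Type*} [DecidableEq L] {label : ι → V → L}
    {admissible : V → V → Finset V → Prop} {P : ι → V → V → Finset V → Prop}
    (hinj : ∀ {i j v w}, label i v = label j w → v = w)
    (htransfer : ∀ {i j s t F}, admissible s t F →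
      (∀ w ∈ insert s (insert t F), label i w = label j w) → P j s t F → P i s t F) :
    ∃ D : L → L → Finset L → Bool, ∀ i s t F, admissible s t F →
      (D (label i s) (label i t) (F.image (label i)) = true ↔ P i s t F) := by
  have hmem {i j} {F F' : Finset V} (h : F.image (label i) = F'.image (label j)) {w} (hw : w ∈ F) :
      w ∈ F' ∧ label i w = label j w := by
    obtain ⟨w', hw', heq⟩ := mem_image.1 (h ▸ mem_image_of_mem (label i) hw)
    obtain rfl := hinj heq
    exact ⟨hw', heq.symm⟩
  refine ⟨fun ls lt lF => decide (∃ j s t F, label j s = ls ∧ label j t = lt ∧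
    F.image (label j) = lF ∧ P j s t F), fun i s t F hadm => ?_⟩
  rw [decide_eq_true_eq]
  refine ⟨?_, fun h => ⟨i, s, t, F, rfl, rfl, rfl, h⟩⟩
  rintro ⟨j, s', t', F', hs, ht, hF, h⟩
  obtain rfl := hinj hs
  obtain rfl := hinj ht
  obtain rfl : F' = F := Subset.antisymm (fun w hw => (hmem hF hw).1)
    fun w hw => (hmem hF.symm hw).1
  refine htransfer hadm (fun w hw => ?_) h
  obtain rfl | rfl | hw := by simpa only [mem_insert] using hw
  exacts [hs.symm, ht.symm, (hmem hF hw).2.symm]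

end Decoder

section Scheme

/-- The number of seeds used by the labeling scheme for at most `f` faults in graphs with fewer than
`2 ^ p` vertices. -/
def numSeeds (f p : ℕ) : ℕ := 4 * (12 * f * p) ^ 3 * (516 * f * p ^ 2)

theorem code_bits_le {f p : ℕ} (hf : 1 ≤ f) (hp : 1 ≤ p) :
    (f + 2) * (p + (1 + p * (1 + (2 * p + 54) * (1 + 1 + 1))) + 1) ≤ 516 * f * p ^ 2 :=
  calc (f + 2) * (p + (1 + p * (1 + (2 * p + 54) * (1 + 1 + 1))) + 1)
      ≤ 3 * f * (172 * p ^ 2) := Nat.mul_le_mul (by omega) (by nlinarith)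
    _ = 516 * f * p ^ 2 := by ring

theorem clusterLabel_bits_le {p R : ℕ} (hp : 1 ≤ p) (hR : p ≤ R) :
    2 * p + 6 + (R * 1 + (R * (p + p + (2 * p + 6) + 1) +
      (R * 1 + (2 * p + 54) * (2 * p + 6 + (R * 1 + R * 1) + 1)))) ≤ 637 * p * R := by
  have hanchor : R * (p + p + (2 * p + 6) + 1) ≤ R * (11 * p) :=
    Nat.mul_le_mul_left R (by omega)
  have hvisits : (2 * p + 54) * (2 * p + 6 + (R * 1 + R * 1) + 1) ≤ 56 * p * (11 * R) :=
    Nat.mul_le_mul (by omega) (by omega)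
  nlinarith

theorem label_bits_le {p R : ℕ} (hp : 1 ≤ p) (hR : p ≤ R) :
    p + (p + (2 * p + 6 + (R * 1 + (p * p + p * (637 * p * R))))) ≤ 649 * p ^ 2 * R := by
  have hpR : R ≤ p ^ 2 * R := Nat.le_mul_of_pos_left R (by positivity)
  have hpp : p * p ≤ p ^ 2 * R := by
    rw [← pow_two]
    exact Nat.le_mul_of_pos_right _ (by omega)
  nlinarith

theorem mul_lt_two_pow {n p : ℕ} (hn : n < 2 ^ p) : n * (2 * p + 54) < 2 ^ (2 * p + 6) := by
  have hp : 2 * p + 54 ≤ 2 ^ (p + 6) := by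
    have : p < 2 ^ p := Nat.lt_two_pow_self
    rw [pow_add]
    omega
  calc n * (2 * p + 54) < 2 ^ p * (2 * p + 54) := Nat.mul_lt_mul_of_pos_right hn (by omega)
    _ ≤ 2 ^ p * 2 ^ (p + 6) := Nat.mul_le_mul_left _ hp
    _ = 2 ^ (2 * p + 6) := by ring

variable {V : Type*} {f p : ℕ}

theorem fitsInBits_label_numSeeds (hf : 1 ≤ f) (hp : 1 ≤ p) (hV : FitsInBits V p) :
    FitsInBits (Label V p (2 * p + 54) (2 * p + 6) (numSeeds f p))
      (649 * p ^ 2 * numSeeds f p) := by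
  have hR : p ≤ numSeeds f p := by
    calc p ≤ 3566592 * f ^ 4 * p ^ 4 * p := Nat.le_mul_of_pos_left p (by positivity)
      _ = numSeeds f p := by rw [numSeeds]; ring
  exact (fitsInBits_label hV ((fitsInBits_clusterLabel hV).mono (clusterLabel_bits_le hp hR))).mono
    (label_bits_le hp hR)

variable [Fintype V]

theorem exists_detectsAll (hf : 1 ≤ f) (hp : 1 ≤ p) [NeZero (12 * f * p)]
    (hV : Fintype.card V < 2 ^ p) (G : SimpleGraph V) :
    ∃ (S : ClusterHierarchy G p (2 * p + 54)) (ω : Fin (numSeeds f p) → Seed V p (12 * f * p)),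
      S.DetectsAll f ω := by
  obtain ⟨S⟩ := exists_clusterHierarchy G hV
  have hN : 2 * ((f + 2) * (p + 1)) ≤ 12 * f * p :=
    calc 2 * ((f + 2) * (p + 1)) ≤ 2 * (3 * f * (2 * p)) :=
          Nat.mul_le_mul_left 2 (Nat.mul_le_mul (by omega) (by omega))
      _ = 12 * f * p := by ring
  exact ⟨S, S.exists_seeds hN (by positivity)
    ((fitsInBits_code (FitsInBits.iff_card_le.2 hV.le)).mono (code_bits_le hf hp))⟩

theorem exists_labeling (hf : 1 ≤ f) (hp : 1 ≤ p) (hV : Fintype.card V < 2 ^ p) :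
    ∃ D : (Fin (649 * p ^ 2 * numSeeds f p) → Bool) → (Fin (649 * p ^ 2 * numSeeds f p) → Bool) →
        Finset (Fin (649 * p ^ 2 * numSeeds f p) → Bool) → Bool,
      ∀ G : SimpleGraph V, ∃ L : V → Fin (649 * p ^ 2 * numSeeds f p) → Bool,
        ∀ s t F, s ∉ F → t ∉ F → #F ≤ f →
          (D (L s) (L t) (F.image L) = true ↔ (isolate G F).Reachable s t) := by
  have : NeZero (12 * f * p) := ⟨by positivity⟩
  choose S ω hω using exists_detectsAll hf hp hV
  obtain ⟨encode⟩ := fitsInBits_label_numSeeds hf hp (FitsInBits.iff_card_le.2 hV.le)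
  have hq := mul_lt_two_pow hV
  obtain ⟨D, hD⟩ := exists_decoder (label := fun G w => encode ((S G).label (ω G) (2 * p + 6) w))
    (admissible := fun s t F => s ∉ F ∧ t ∉ F ∧ #F ≤ f)
    (P := fun G s t F => (isolate G F).Reachable s t)
    (fun h => congrArg Label.vertex (encode.injective h))
    fun {G G' s t F} hadm h hst => by
      have hlabel : ∀ w ∈ insert s (insert t F),
        (S G).label (ω G) (2 * p + 6) w = (S G').label (ω G') (2 * p + 6) w :=
          fun w hw => encode.injective (h w hw)
      have hcard : #(insert s (insert t F)) ≤ f + 2 := (card_insert_le _ _).trans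
        (Nat.succ_le_succ ((card_insert_le _ _).trans (Nat.succ_le_succ hadm.2.2)))
      exact ClusterHierarchy.reachable_of_agreeOn
        ((subset_insert _ _).trans (subset_insert _ _)) hcard (hω G')
        (ClusterHierarchy.agreeOn_of_label_eq hq hlabel)
        (ClusterHierarchy.loadsAgreeOn_of_label_eq hq hlabel) (mem_insert_self _ _) hadm.1
        (mem_insert_of_mem (mem_insert_self _ _)) hst
  exact ⟨D, fun G => ⟨_, fun s t F hs ht hF => hD G s t F ⟨hs, ht, hF⟩⟩⟩

end Scheme

theorem log_add_one_le {n : ℕ} (hn : 2 ≤ n) : (Nat.log 2 n + 1 : ℝ) ≤ 2 * Real.logb 2 n := by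
  have hone : (1 : ℝ) ≤ Real.logb 2 n := by
    rw [Real.le_logb_iff_rpow_le one_lt_two (by positivity), Real.rpow_one]
    exact_mod_cast hn
  have hlog : (Nat.log 2 n : ℝ) ≤ Real.logb 2 n := by exact_mod_cast Real.natLog_le_logb n 2
  linarith

theorem label_length_le {n : ℕ} (f : ℕ) (hn : 2 ≤ n) :
    ((649 * (Nat.log 2 n + 1) ^ 2 * numSeeds f (Nat.log 2 n + 1) : ℕ) : ℝ) ≤
      2314718208 * 2 ^ 7 * f ^ 4 * Real.logb 2 n ^ 7 :=
  calc ((649 * (Nat.log 2 n + 1) ^ 2 * numSeeds f (Nat.log 2 n + 1) : ℕ) : ℝ)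
      = 2314718208 * f ^ 4 * (Nat.log 2 n + 1) ^ 7 := by
        rw [numSeeds]
        push_cast
        ring
    _ ≤ 2314718208 * f ^ 4 * (2 * Real.logb 2 n) ^ 7 := by
        gcongr
        exact log_add_one_le hn
    _ = 2314718208 * 2 ^ 7 * f ^ 4 * Real.logb 2 n ^ 7 := by ring

end VertexFault

/-- Deterministic vertex-fault connectivity labels of size
`O(f⁴ · log⁷ n)` bits. -/
theorem stmt_4 :
    ∃ C : ℝ, ∀ n f : ℕ, 2 ≤ n → 1 ≤ f →
      ∃ b : ℕ,
        (b : ℝ) ≤ C * (f : ℝ) ^ 4 * (Real.logb 2 n) ^ 7 ∧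
        ∃ D : (Fin b → Bool) → (Fin b → Bool) → Finset (Fin b → Bool) → Bool,
          ∀ G : SimpleGraph (Fin n),
            ∃ LV : Fin n → Fin b → Bool,
              ∀ (s t : Fin n) (F : Finset (Fin n)) (hs : s ∉ F) (ht : t ∉ F),
                F.card ≤ f →
                (D (LV s) (LV t) (F.image LV) = true ↔
                  (G.induce ((↑F : Set (Fin n))ᶜ)).Reachable
                    ⟨s, by simpa using hs⟩ ⟨t, by simpa using ht⟩) := by
  refine ⟨2314718208 * 2 ^ 7, fun n f hn hf => ⟨_, VertexFault.label_length_le f hn, ?_⟩⟩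
  have hV : Fintype.card (Fin n) < 2 ^ (Nat.log 2 n + 1) :=
    (Fintype.card_fin n).trans_lt (Nat.lt_pow_succ_log_self one_lt_two n)
  obtain ⟨D, hD⟩ := VertexFault.exists_labeling hf (Nat.succ_pos _) hV
  refine ⟨D, fun G => ?_⟩
  obtain ⟨L, hL⟩ := hD G
  exact ⟨L, fun s t F hs ht hF => (hL s t F hs ht hF).trans
    (VertexFault.reachable_isolate_iff (by simpa using hs) (by simpa using ht))⟩
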